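/- Let g = s ⋉ h be a finite-dimensional sympathetic complex Lie algebra that is not semisimple, with simple Levi subalgebra s, whose radical h decomposes into 4 simple s-modules satisfying the convention. Then dim_C g ≥ 25. Moreover, dim_C g = 25 if and only if s is isomorphic to sl2(C) and the four irreducible modules have dimensions 7, 5, 7 and 3 (highest weights 6, 4, 6, 2), with Z(h) equal to the 3-dimensional module. -/

import Mathlib

namespace Symp

variable (g : Type*) [LieRing g] [LieAlgebra ℂ g]

/-- A derivation of `g` is inner if it is given by the adjoint action of some element. -/
def IsInnerDer {g : Type*} [LieRing g] [LieAlgebra ℂ g] (D : LieDerivation ℂ g g) : Prop :=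
  ∃ x : g, ∀ y : g, D y = ⁅x, y⁆

/-- `g` is perfect: `[g,g] = g`. -/
def IsPerfectLie : Prop :=
  ⁅(⊤ : LieIdeal ℂ g), (⊤ : LieIdeal ℂ g)⁆ = ⊤

/-- A sympathetic Lie algebra: trivial centre, perfect, all derivations inner. -/
def IsSympathetic : Prop :=
  LieAlgebra.center ℂ g = ⊥ ∧ IsPerfectLie g ∧
    ∀ D : LieDerivation ℂ g g, IsInnerDer D

/-- `s` is a simple Levi subalgebra of `g`: it is a simple Lie algebra and a vector-space
complement to the radical. -/
def IsSimpleLevi (s : LieSubalgebra ℂ g) : Prop :=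
  LieAlgebra.IsSimple ℂ s ∧
    IsCompl s.toSubmodule (LieAlgebra.radical ℂ g).toSubmodule

/-- `s` is a Levi subalgebra of `g` isomorphic to `sl₂(ℂ)`. -/
def IsSl2Levi (s : LieSubalgebra ℂ g) : Prop :=
  Nonempty (s ≃ₗ⁅ℂ⁆ LieAlgebra.SpecialLinear.sl (Fin 2) ℂ) ∧
    IsCompl s.toSubmodule (LieAlgebra.radical ℂ g).toSubmodule

/-- The subspace spanned by all brackets `⁅x, y⁆` with `x ∈ A`, `y ∈ B`. -/
def lieSpan2 (A B : Submodule ℂ g) : Submodule ℂ g :=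
  Submodule.span ℂ {z : g | ∃ x ∈ A, ∃ y ∈ B, z = ⁅x, y⁆}

/-- A subspace of `g` invariant under the bracket action of the subalgebra `s`. -/
def Invariant (s : LieSubalgebra ℂ g) (W : Submodule ℂ g) : Prop :=
  ∀ x ∈ s, ∀ w ∈ W, ⁅x, w⁆ ∈ W

/-- `V` is an irreducible `s`-submodule of `g`. -/
def IsIrreducibleSMod (s : LieSubalgebra ℂ g) (V : Submodule ℂ g) : Prop :=
  V ≠ ⊥ ∧ Invariant g s V ∧
    ∀ W : Submodule ℂ g, W ≤ V → Invariant g s W → W = ⊥ ∨ W = V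

/-- The family `V` is a decomposition of the radical of `g` into irreducible `s`-modules. -/
def IsDecomp (s : LieSubalgebra ℂ g) {k : ℕ} (V : Fin k → Submodule ℂ g) : Prop :=
  (∀ i, IsIrreducibleSMod g s (V i)) ∧ iSupIndep V ∧
    (⨆ i, V i) = (LieAlgebra.radical ℂ g).toSubmodule

/-- The convention: any nonzero bracket of two of the modules equals one of them,
for a unique index. -/
def Convention {k : ℕ} (V : Fin k → Submodule ℂ g) : Prop :=
  ∀ i j, lieSpan2 g (V i) (V j) ≠ ⊥ → ∃! q, lieSpan2 g (V i) (V j) = V q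

/-- The centre `Z(h)` of the radical `h = Rad(g)`, as a subspace of `g`. -/
def centerRad : Submodule ℂ g where
  carrier := {x | x ∈ LieAlgebra.radical ℂ g ∧ ∀ y ∈ LieAlgebra.radical ℂ g, ⁅x, y⁆ = 0}
  add_mem' := by
    rintro a b ⟨ha, ha'⟩ ⟨hb, hb'⟩
    exact ⟨add_mem ha hb, fun y hy => by rw [add_lie, ha' y hy, hb' y hy, add_zero]⟩
  zero_mem' := ⟨zero_mem _, fun y _ => zero_lie y⟩
  smul_mem' := by
    rintro c a ⟨ha, ha'⟩
    exact ⟨SMulMemClass.smul_mem c ha, fun y hy => by rw [smul_lie, ha' y hy, smul_zero]⟩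

/-- The derived subalgebra `[h,h]` of the radical `h = Rad(g)`, as a subspace of `g`. -/
def derivedRad : Submodule ℂ g :=
  lieSpan2 g (LieAlgebra.radical ℂ g).toSubmodule (LieAlgebra.radical ℂ g).toSubmodule

end Symp

namespace Symp
section basic
attribute [local instance] LieRing.ofAssociativeRing
variable {g : Type*} [LieRing g] [LieAlgebra ℂ g]

lemma lieSpan2_le {A B W : Submodule ℂ g} :
    lieSpan2 g A B ≤ W ↔ ∀ x ∈ A, ∀ y ∈ B, ⁅x, y⁆ ∈ W := by
  unfold lieSpan2
  rw [Submodule.span_le]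
  constructor
  · intro h x hx y hy
    exact h ⟨x, hx, y, hy, rfl⟩
  · rintro h z ⟨x, hx, y, hy, rfl⟩
    exact h x hx y hy

lemma lie_mem_lieSpan2 {A B : Submodule ℂ g} {x y : g} (hx : x ∈ A) (hy : y ∈ B) :
    ⁅x, y⁆ ∈ lieSpan2 g A B := Submodule.subset_span ⟨x, hx, y, hy, rfl⟩

lemma lieSpan2_comm_le (A B : Submodule ℂ g) : lieSpan2 g A B ≤ lieSpan2 g B A := by
  rw [lieSpan2_le]
  intro x hx y hy
  rw [← lie_skew]
  exact neg_mem (lie_mem_lieSpan2 hy hx)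

lemma lieSpan2_comm (A B : Submodule ℂ g) : lieSpan2 g A B = lieSpan2 g B A :=
  le_antisymm (lieSpan2_comm_le A B) (lieSpan2_comm_le B A)

lemma lieSpan2_mono {A B A' B' : Submodule ℂ g} (h1 : A ≤ A') (h2 : B ≤ B') :
    lieSpan2 g A B ≤ lieSpan2 g A' B' := by
  rw [lieSpan2_le]
  intro x hx y hy
  exact lie_mem_lieSpan2 (h1 hx) (h2 hy)

lemma lieSpan2_eq_bot {A B : Submodule ℂ g} :
    lieSpan2 g A B = ⊥ ↔ ∀ x ∈ A, ∀ y ∈ B, ⁅x, y⁆ = 0 := by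
  rw [← le_bot_iff, lieSpan2_le]; simp

/-- The weight argument: in a nontrivial module of a perfect Lie algebra there is a vector killed by
the radical. -/
lemma exists_killed [FiniteDimensional ℂ g] (hp : IsPerfectLie g)
    (M : Type*) [AddCommGroup M] [Module ℂ M] [LieRingModule g M] [LieModule ℂ g M]
    [FiniteDimensional ℂ M] [Nontrivial M] :
    ∃ v : M, v ≠ 0 ∧ ∀ x ∈ LieAlgebra.radical ℂ g, ⁅x, v⁆ = 0 := by
  obtain ⟨χ, hχ⟩ := LieModule.exists_nontrivial_weightSpace_of_isSolvable ℂ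
    (LieAlgebra.radical ℂ g) M
  let W : LieSubmodule ℂ g M := LieModule.weightSpaceOfIsLieTower ℂ M χ
  have hW : Nontrivial W := hχ
  have hWm : ∀ (x : LieAlgebra.radical ℂ g) (v : M), v ∈ W → ⁅x, v⁆ = χ x • v := by
    intro x v hv
    exact (LieModule.mem_weightSpace (M := M) χ v).1 hv x
  have htr : ∀ x : g, (LieModule.toEnd ℂ g W x).trace ℂ W = 0 := by
    intro x
    have hx : x ∈ ⁅(⊤ : LieIdeal ℂ g), (⊤ : LieIdeal ℂ g)⁆ := by rw [hp]; trivial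
    rw [← LieSubmodule.mem_toSubmodule] at hx
    rw [LieSubmodule.lieIdeal_oper_eq_linear_span'] at hx
    induction hx using Submodule.span_induction with
    | mem y hy =>
      obtain ⟨a, -, b, -, rfl⟩ := hy
      rw [LieHom.map_lie, LinearMap.trace_lie]
    | zero => simp
    | add a b _ _ ha hb => simp [ha, hb]
    | smul c a _ ha => simp [ha]
  obtain ⟨v, hv⟩ := exists_ne (0 : W)
  refine ⟨v, by simpa using hv, ?_⟩
  intro x hx
  have h1 : LieModule.toEnd ℂ g W x = χ ⟨x, hx⟩ • (1 : Module.End ℂ W) := by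
    ext w
    have := hWm ⟨x, hx⟩ w w.2
    simpa using this
  have h2 := htr x
  rw [h1] at h2
  have h3 : Module.finrank ℂ W ≠ 0 := Module.finrank_pos.ne'
  have h4 : χ ⟨x, hx⟩ = 0 := by
    simpa [h3] using h2
  have := hWm ⟨x, hx⟩ v v.2
  rw [h4, zero_smul] at this
  exact this

/-- Lower central series of the radical, as subspaces. -/
def lc (g : Type*) [LieRing g] [LieAlgebra ℂ g] : ℕ → Submodule ℂ g
  | 0 => (LieAlgebra.radical ℂ g).toSubmodule
  | (n+1) => lieSpan2 g (LieAlgebra.radical ℂ g).toSubmodule (lc g n)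

lemma lc_succ_le (n : ℕ) : lc g (n+1) ≤ lc g n := by
  induction n with
  | zero =>
    change lieSpan2 g _ _ ≤ _
    rw [lieSpan2_le]
    intro x hx y hy
    exact lie_mem_right ℂ g _ x y hy
  | succ n ih =>
    exact lieSpan2_mono le_rfl ih

lemma lc_anti : Antitone (lc g) := antitone_nat_of_succ_le lc_succ_le

lemma lc_lie (m n : ℕ) : ∀ x ∈ lc g m, ∀ y ∈ lc g n, ⁅x, y⁆ ∈ lc g (m + n + 1) := by
  induction m generalizing n with
  | zero =>
    intro x hx y hy
    rw [zero_add]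
    exact lie_mem_lieSpan2 hx hy
  | succ m ih =>
    intro x hx y hy
    have hx' : x ∈ lieSpan2 g (LieAlgebra.radical ℂ g).toSubmodule (lc g m) := hx
    unfold lieSpan2 at hx'
    induction hx' using Submodule.span_induction with
    | mem z hz =>
      obtain ⟨a, ha, b, hb, rfl⟩ := hz
      rw [lie_lie]
      refine sub_mem ?_ ?_
      · rw [show m + 1 + n + 1 = (m + n + 1) + 1 by ring]
        exact lie_mem_lieSpan2 ha (ih n b hb y hy)
      · rw [show m + 1 + n + 1 = m + (n + 1) + 1 by ring]
        exact ih (n+1) b hb _ (lie_mem_lieSpan2 ha hy)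
    | zero => simp
    | add a b ha' hb' ha hb =>
      rw [add_lie]; exact add_mem (ha ha') (hb hb')
    | smul c a ha' ha => rw [smul_lie]; exact Submodule.smul_mem _ _ (ha ha')

/-- next term of the upper central series for the action of the radical -/
def ucNext (U : LieIdeal ℂ g) : LieIdeal ℂ g where
  carrier := {v | ∀ x ∈ LieAlgebra.radical ℂ g, ⁅x, v⁆ ∈ U}
  add_mem' := by
    intro a b ha hb x hx
    rw [lie_add]; exact add_mem (ha x hx) (hb x hx)
  zero_mem' := by intro x hx; simp
  smul_mem' := by
    intro c a ha x hx
    rw [lie_smul]; exact SMulMemClass.smul_mem c (ha x hx)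
  lie_mem := by
    intro y m hm x hx
    rw [leibniz_lie]
    refine add_mem ?_ ?_
    · exact hm _ (lie_mem_left ℂ g _ x y hx)
    · exact lie_mem_right ℂ g U y _ (hm x hx)

lemma lc_nilpotent [FiniteDimensional ℂ g] (hp : IsPerfectLie g) : ∃ N, lc g N = ⊥ := by
  obtain ⟨n, hn⟩ := IsArtinian.monotone_stabilizes
    (⟨fun n => OrderDual.toDual (lc g n), fun a b h => lc_anti h⟩ : ℕ →o (Submodule ℂ g)ᵒᵈ)
  have hst : lc g n = lc g (n+1) := hn (n+1) (Nat.le_succ n)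
  have key : ∀ k : ℕ, ∃ U : LieIdeal ℂ g, (U = ⊤ ∨ k ≤ Module.finrank ℂ U) ∧
      (lc g n ≤ U.toSubmodule → lc g n = ⊥) := by
    intro k
    induction k with
    | zero => exact ⟨⊥, Or.inr (Nat.zero_le _), fun h => by simpa using h⟩
    | succ k ih =>
      obtain ⟨U, hU, hn⟩ := ih
      by_cases hT : U = ⊤
      · exact ⟨U, Or.inl hT, hn⟩
      have hle : U < ucNext U := by
        have hnt : Nontrivial (g ⧸ U) := by
          rw [← not_subsingleton_iff_nontrivial]
          intro hss
          apply hT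
          have := (Submodule.Quotient.subsingleton_iff (p := U.toSubmodule)).1 hss
          simpa using this
        obtain ⟨v, hv, hk⟩ := exists_killed hp (g ⧸ U)
        obtain ⟨w, rfl⟩ := LieSubmodule.Quotient.surjective_mk' U v
        have hle : U ≤ ucNext U := by
          intro u hu x hx
          exact lie_mem_right ℂ g U x u hu
        refine lt_of_le_of_ne hle ?_
        intro heq
        apply hv
        have hw : w ∈ ucNext U := by
          intro x hx
          have := hk x hx
          rw [← LieModuleHom.map_lie] at this
          exact (LieSubmodule.Quotient.mk_eq_zero').1 this
        rw [← heq] at hw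
        exact (LieSubmodule.Quotient.mk_eq_zero').2 hw
      refine ⟨ucNext U, Or.inr ?_, ?_⟩
      · have h1 := hU.resolve_left hT
        have h2 : Module.finrank ℂ U.toSubmodule < Module.finrank ℂ (ucNext U).toSubmodule :=
          Submodule.finrank_lt_finrank_of_lt hle
        exact lt_of_le_of_lt h1 h2
      · intro h
        apply hn
        rw [hst]
        change lieSpan2 g _ _ ≤ _
        rw [lieSpan2_le]
        intro x hx y hy
        exact h hy x hx
  obtain ⟨U, hU, hn⟩ := key (Module.finrank ℂ g + 1)
  refine ⟨n, hn ?_⟩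
  rcases hU with rfl | hU
  · exact fun _ _ => trivial
  · have : Module.finrank ℂ U.toSubmodule ≤ Module.finrank ℂ g := Submodule.finrank_le _
    have h2 : Module.finrank ℂ U = Module.finrank ℂ U.toSubmodule := rfl
    omega
end basic
end Symp

namespace Symp
section comb

/-- transported bracket table -/
def Pat (b : Fin 4 → Fin 4 → Option (Fin 4)) : Prop :=
  b 0 2 = some 3 ∧ b 2 2 = none ∧ (∀ i, b i 3 = none) ∧ (∀ i j, b i j ≠ some 0 ∧ b i j ≠ some 1) ∧
  ((b 0 0 = some 2 ∧ b 0 1 = some 2 ∧ b 1 1 = some 3 ∧ b 1 2 = none) ∨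
   (b 0 0 = some 2 ∧ b 0 1 = some 3 ∧ b 1 1 = some 3 ∧ b 1 2 = none) ∨
   (b 0 0 = some 3 ∧ b 0 1 = some 2 ∧ b 1 1 = some 3 ∧ b 1 2 = none) ∨
   (b 0 0 = some 3 ∧ b 0 1 = some 2 ∧ b 1 2 = some 3))

def tr (e : Equiv.Perm (Fin 4)) (br : Fin 4 → Fin 4 → Option (Fin 4)) (i j : Fin 4) :
    Option (Fin 4) := (br (e i) (e j)).map e.symm

/-- combinatorial content -/
structure Comb (br : Fin 4 → Fin 4 → Option (Fin 4)) (l : Fin 4 → ℕ) : Prop where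
  sym : ∀ i j, br i j = br j i
  up : ∀ i j q, br i j = some q → l i + l j + 1 ≤ l q
  down : ∀ q n, l q = n + 1 → ∃ i j, l i = 0 ∧ l j = n ∧ br i j = some q
  diag : ∀ d : Fin 4 → ℤ, (∀ i j q, br i j = some q → d i + d j = d q) → d = 0
  jac : ∀ i j k c z, br i j = some c → br c k = some z →
    (∃ m, br j k = some m ∧ br i m ≠ none) ∨ (∃ m, br i k = some m ∧ br j m ≠ none)

lemma tr_some {e : Equiv.Perm (Fin 4)} {br : Fin 4 → Fin 4 → Option (Fin 4)} {i j q : Fin 4} :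
    tr e br i j = some q ↔ br (e i) (e j) = some (e q) := by
  unfold tr
  constructor
  · intro h
    rw [Option.map_eq_some_iff] at h
    obtain ⟨a, h1, rfl⟩ := h
    simpa using h1
  · intro h; simp [h]

lemma tr_none {e : Equiv.Perm (Fin 4)} {br : Fin 4 → Fin 4 → Option (Fin 4)} {i j : Fin 4} :
    tr e br i j = none ↔ br (e i) (e j) = none := by
  unfold tr; simp

lemma Comb.tr {br : Fin 4 → Fin 4 → Option (Fin 4)} {l : Fin 4 → ℕ} (h : Comb br l)
    (e : Equiv.Perm (Fin 4)) : Comb (tr e br) (l ∘ e) where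
  sym i j := by unfold Symp.tr; rw [h.sym]
  up i j q hq := h.up _ _ _ (tr_some.1 hq)
  down q n hq := by
    obtain ⟨i, j, h1, h2, h3⟩ := h.down _ _ hq
    refine ⟨e.symm i, e.symm j, by simpa using h1, by simpa using h2, ?_⟩
    rw [tr_some]; simpa using h3
  diag d hd := by
    have := h.diag (d ∘ e.symm) (fun i j q hq => by
      have := hd (e.symm i) (e.symm j) (e.symm q) (by rw [tr_some]; simpa using hq)
      simpa using this)
    funext i
    have := congrFun this (e i)
    simpa using this
  jac i j k c z h1 h2 := by
    rcases h.jac _ _ _ _ _ (tr_some.1 h1) (tr_some.1 h2) with ⟨m, h3, h4⟩ | ⟨m, h3, h4⟩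
    · left
      refine ⟨e.symm m, by rw [tr_some]; simpa using h3, ?_⟩
      rw [Ne, tr_none]; simpa using h4
    · right
      refine ⟨e.symm m, by rw [tr_some]; simpa using h3, ?_⟩
      rw [Ne, tr_none]; simpa using h4

lemma tr_tr (e f : Equiv.Perm (Fin 4)) (br : Fin 4 → Fin 4 → Option (Fin 4)) :
    tr f (tr e br) = tr (f.trans e) br := by
  funext i j
  unfold tr
  simp only [Option.map_map]
  rfl

lemma exists_perm (A B C Z : Fin 4) (h1 : A ≠ B) (h2 : A ≠ C) (h3 : A ≠ Z) (h4 : B ≠ C)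
    (h5 : B ≠ Z) (h6 : C ≠ Z) : ∃ e : Equiv.Perm (Fin 4), e 0 = A ∧ e 1 = B ∧ e 2 = C ∧ e 3 = Z := by
  have hinj : Function.Injective ![A, B, C, Z] := by
    intro i j hij
    fin_cases i <;> fin_cases j <;> simp_all
  exact ⟨Equiv.ofBijective _ (Finite.injective_iff_bijective.1 hinj), rfl, rfl, rfl, rfl⟩

lemma levels {br : Fin 4 → Fin 4 → Option (Fin 4)} {l : Fin 4 → ℕ} (h : Comb br l) :
    ∃ e : Equiv.Perm (Fin 4), l (e 0) = 0 ∧ l (e 1) = 0 ∧ l (e 2) = 1 ∧ l (e 3) = 2 := by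
  have hx : ∃ i j q, br i j = some q ∧ l i + l j + 2 ≤ l q := by
    by_contra hcon
    push Not at hcon
    have := h.diag (fun i => (l i : ℤ) + 1) (fun i j q hq => by
      have h1 := h.up _ _ _ hq
      have h2 := hcon _ _ _ hq
      omega)
    have := congrFun this 0
    simp at this
    omega
  obtain ⟨i, j, q, hq, hl⟩ := hx
  have hdown : ∀ n, ∀ q, l q = n → ∀ m ≤ n, ∃ p, l p = m := by
    intro n
    induction n with
    | zero => intro q hq m hm; exact ⟨q, by omega⟩
    | succ n ih =>
      intro q hq m hm
      rcases Nat.lt_or_ge n m with h1 | h1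
      · exact ⟨q, by omega⟩
      · obtain ⟨i, j, -, h2, -⟩ := h.down q n hq
        exact ih j h2 m h1
  have h2q : l q = 2 := by
    by_contra hne
    have h3 : 3 ≤ l q := by omega
    obtain ⟨p0, hp0⟩ := hdown _ q rfl 0 (by omega)
    obtain ⟨p1, hp1⟩ := hdown _ q rfl 1 (by omega)
    obtain ⟨p2, hp2⟩ := hdown _ q rfl 2 (by omega)
    obtain ⟨p3, hp3⟩ := hdown _ q rfl 3 (by omega)
    obtain ⟨e, he0, he1, he2, he3⟩ := exists_perm p0 p1 p2 p3
      (by rintro rfl; omega) (by rintro rfl; omega) (by rintro rfl; omega)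
      (by rintro rfl; omega) (by rintro rfl; omega) (by rintro rfl; omega)
    have hall : ∀ x, x = p0 ∨ x = p1 ∨ x = p2 ∨ x = p3 := by
      intro x
      obtain ⟨y, rfl⟩ := e.surjective x
      fin_cases y <;> simp [← he0, ← he1, ← he2, ← he3]
    have a0 : ∀ x, l x = 0 → x = p0 := by
      intro x hx; rcases hall x with rfl | rfl | rfl | rfl <;> first | rfl | omega
    have a1 : ∀ x, l x = 1 → x = p1 := by
      intro x hx; rcases hall x with rfl | rfl | rfl | rfl <;> first | rfl | omega
    have a3 : ∀ x, 3 ≤ l x → x = p3 := by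
      intro x hx; rcases hall x with rfl | rfl | rfl | rfl <;> first | rfl | omega
    obtain ⟨x1, y1, h11, h12, h13⟩ := h.down p1 0 hp1
    obtain ⟨x2, y2, h21, h22, h23⟩ := h.down p2 1 hp2
    rw [a0 x1 h11, a0 y1 h12] at h13
    rw [a0 x2 h21, a1 y2 h22] at h23
    have hq3 := a3 q h3
    rw [hq3] at hq hl
    have : (l i = 0 ∧ l j = 0) ∨ (l i = 0 ∧ l j = 1) ∨ (l i = 1 ∧ l j = 0) := by omega
    rcases this with ⟨u, v⟩ | ⟨u, v⟩ | ⟨u, v⟩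
    · rw [a0 i u, a0 j v, h13, Option.some_inj] at hq
      rw [hq] at hp1; omega
    · rw [a0 i u, a1 j v, h23, Option.some_inj] at hq
      rw [hq] at hp2; omega
    · rw [a1 i u, a0 j v, h.sym, h23, Option.some_inj] at hq
      rw [hq] at hp2; omega
  obtain ⟨c, hc⟩ := hdown _ q rfl 1 (by omega)
  obtain ⟨a, b, ha, hb, hab⟩ := h.down c 0 hc
  have hi : l i = 0 := by omega
  have hj : l j = 0 := by omega
  have hcq : c ≠ q := by rintro rfl; omega
  have : ∃ x y, x ≠ y ∧ l x = 0 ∧ l y = 0 := by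
    by_contra hcon
    push Not at hcon
    have e1 : i = a := by by_contra hne; exact hcon i a hne hi ha
    have e2 : j = b := by by_contra hne; exact hcon j b hne hj hb
    rw [e1, e2, hab, Option.some_inj] at hq
    exact hcq hq
  obtain ⟨x, y, hxy, hx, hy⟩ := this
  obtain ⟨e, he0, he1, he2, he3⟩ := exists_perm x y c q hxy
      (by rintro rfl; omega) (by rintro rfl; omega)
      (by rintro rfl; omega) (by rintro rfl; omega) hcq
  exact ⟨e, by rw [he0, hx], by rw [he1, hy], by rw [he2, hc], by rw [he3, h2q]⟩

set_option maxHeartbeats 1000000 in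
lemma comb_pat' {br : Fin 4 → Fin 4 → Option (Fin 4)} {l : Fin 4 → ℕ} (h : Comb br l)
    (h0 : l 0 = 0) (h1 : l 1 = 0) (h2 : l 2 = 1) (h3 : l 3 = 2) (hAC : br 0 2 = some 3) :
    Pat br ∨ Pat (tr (Equiv.swap 0 1) br) := by
  have key : ∀ i j, br i j = none ∨ (br i j = some 2 ∧ l i = 0 ∧ l j = 0) ∨
     (br i j = some 3 ∧ l i + l j ≤ 1) := by
    intro i j
    rcases hq : br i j with _ | q
    · simp
    · have := h.up _ _ _ hq
      fin_cases q <;> simp_all <;> omega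
  have kn : ∀ i j, 2 ≤ l i + l j → br i j = none := by
    intro i j hij
    rcases key i j with h | h | h
    · exact h
    · omega
    · omega
  have h22 : br 2 2 = none := kn _ _ (by omega)
  have hi3 : ∀ i, br i 3 = none := fun i => kn _ _ (by omega)
  have h3i : ∀ i, br 3 i = none := fun i => kn _ _ (by omega)
  have h12 : br 1 2 = none ∨ br 1 2 = some 3 := by
    rcases key 1 2 with h | h | h
    · exact Or.inl h
    · omega
    · exact Or.inr h.1
  have k' : ∀ i j, br i j = none ∨ br i j = some 2 ∨ br i j = some 3 := by
    intro i j
    rcases key i j with h | h | h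
    · exact Or.inl h
    · exact Or.inr (Or.inl h.1)
    · exact Or.inr (Or.inr h.1)
  have s10 := h.sym 1 0
  have s20 := h.sym 2 0
  have s21 := h.sym 2 1
  have h01 : ∀ i j, br i j ≠ some 0 ∧ br i j ≠ some 1 := by
    intro i j
    rcases k' i j with h | h | h <;> rw [h] <;> simp
  have dd : ∀ x0 x1 x2 x3 : ℤ,
     (br 0 0 = none ∨ (br 0 0 = some 2 ∧ x0 + x0 = x2) ∨ (br 0 0 = some 3 ∧ x0 + x0 = x3)) →
     (br 0 1 = none ∨ (br 0 1 = some 2 ∧ x0 + x1 = x2) ∨ (br 0 1 = some 3 ∧ x0 + x1 = x3)) →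
     (br 1 1 = none ∨ (br 1 1 = some 2 ∧ x1 + x1 = x2) ∨ (br 1 1 = some 3 ∧ x1 + x1 = x3)) →
     (br 1 2 = none ∨ (br 1 2 = some 3 ∧ x1 + x2 = x3)) →
     x0 + x2 = x3 → x0 = 0 := by
    intro x0 x1 x2 x3 e1 e2 e3 e4 e5
    have e1' : ∀ q, br 0 0 = some q → x0 + x0 = ![x0,x1,x2,x3] q := by
      intro q hq
      rcases e1 with h | h | h
      · rw [hq] at h; cases h
      · rw [hq] at h; rw [Option.some_inj.1 h.1]; exact h.2
      · rw [hq] at h; rw [Option.some_inj.1 h.1]; exact h.2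
    have e2' : ∀ q, br 0 1 = some q → x0 + x1 = ![x0,x1,x2,x3] q := by
      intro q hq
      rcases e2 with h | h | h
      · rw [hq] at h; cases h
      · rw [hq] at h; rw [Option.some_inj.1 h.1]; exact h.2
      · rw [hq] at h; rw [Option.some_inj.1 h.1]; exact h.2
    have e3' : ∀ q, br 1 1 = some q → x1 + x1 = ![x0,x1,x2,x3] q := by
      intro q hq
      rcases e3 with h | h | h
      · rw [hq] at h; cases h
      · rw [hq] at h; rw [Option.some_inj.1 h.1]; exact h.2
      · rw [hq] at h; rw [Option.some_inj.1 h.1]; exact h.2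
    have e4' : ∀ q, br 1 2 = some q → x1 + x2 = ![x0,x1,x2,x3] q := by
      intro q hq
      rcases e4 with h | h
      · rw [hq] at h; cases h
      · rw [hq] at h; rw [Option.some_inj.1 h.1]; exact h.2
    have e5' : ∀ q, br 0 2 = some q → x0 + x2 = ![x0,x1,x2,x3] q := by
      intro q hq
      rw [hq] at hAC; rw [Option.some_inj.1 hAC]; exact e5
    have hd := h.diag ![x0,x1,x2,x3] (by
      intro i j q hq
      have hn : ∀ {i j}, br i j = none → br i j = some q → False := by
        intro i j h1 h2; rw [h1] at h2; cases h2
      fin_cases i <;> fin_cases j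
      · exact e1' q hq
      · exact e2' q hq
      · exact e5' q hq
      · exact (hn (hi3 _) hq).elim
      · exact (add_comm _ _).trans (e2' q ((h.sym 0 1).trans hq))
      · exact e3' q hq
      · exact e4' q hq
      · exact (hn (hi3 _) hq).elim
      · exact (add_comm _ _).trans (e5' q ((h.sym 0 2).trans hq))
      · exact (add_comm _ _).trans (e4' q ((h.sym 1 2).trans hq))
      · exact (hn h22 hq).elim
      · exact (hn (hi3 _) hq).elim
      · exact (hn (h3i _) hq).elim
      · exact (hn (h3i _) hq).elim
      · exact (hn (h3i _) hq).elim
      · exact (hn (h3i _) hq).elim)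
    exact congrFun hd 0
  have hC : br 0 0 = some 2 ∨ br 0 1 = some 2 ∨ br 1 1 = some 2 := by
    obtain ⟨p, q, hp, hq, hc⟩ := h.down 2 0 h2
    fin_cases p <;> fin_cases q <;> simp_all
  have hj : ∀ i j, br i j = none → br i j ≠ none → False := fun i j h1 h2 => h2 h1
  have j2 : br 1 1 = some 2 → br 0 1 = some 2 ∧ br 1 2 = some 3 := by
    intro hb
    have hm : ∃ m, br 1 0 = some m ∧ br 1 m ≠ none := by
      rcases h.jac 1 1 0 2 3 hb (s20.trans hAC) with h | h <;> exact h
    obtain ⟨m, hm1, hm2⟩ := hm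
    rw [s10] at hm1
    rcases k' 0 1 with h | h | h
    · rw [h] at hm1; cases hm1
    · rw [h] at hm1; cases hm1
      exact ⟨h, h12.resolve_left hm2⟩
    · rw [h] at hm1; cases hm1
      exact (hm2 (hi3 _)).elim
  rcases h12 with b12 | b12
  · left
    refine ⟨hAC, h22, hi3, h01, ?_⟩
    have b11 : br 1 1 = none ∨ br 1 1 = some 3 := by
      rcases k' 1 1 with h | h | h
      · exact Or.inl h
      · have := (j2 h).2; rw [b12] at this; cases this
      · exact Or.inr h
    have hC' : br 0 0 = some 2 ∨ br 0 1 = some 2 := by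
      rcases hC with h | h | h
      · exact Or.inl h
      · exact Or.inr h
      · rcases b11 with h' | h' <;> (rw [h] at h'; cases h')
    have d1 := dd 1 2 3 4
    have d2 := dd 2 3 4 6
    have d3 := dd 1 2 2 3
    have d4 := dd 1 0 1 2
    have d5 := dd 1 1 2 3
    clear dd hj j2 hC key kn
    rcases hC' with hc | hc
    · have := k' 0 1
      clear k'
      rcases b11 with b11 | b11 <;> rcases this with b01 | b01 | b01 <;> simp_all
    · have := k' 0 0
      clear k'
      rcases b11 with b11 | b11 <;> rcases this with b01 | b01 | b01 <;> simp_all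
  · have b01 : br 0 1 = some 2 := by
      rcases hC with h' | h' | h'
      · have hm : ∃ m, br 0 1 = some m ∧ br 0 m ≠ none := by
          rcases h.jac 0 0 1 2 3 h' (s21.trans b12) with h | h <;> exact h
        obtain ⟨m, hm1, hm2⟩ := hm
        rcases k' 0 1 with h | h | h
        · rw [h] at hm1; cases hm1
        · exact h
        · rw [h] at hm1; cases hm1
          exact (hm2 (hi3 _)).elim
      · exact h'
      · exact (j2 h').1
    have hz : br 0 0 = some 3 ∨ br 1 1 = some 3 := by
      by_contra hcon
      push Not at hcon
      have d5 := dd 1 1 2 3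
        (by rcases k' 0 0 with h | h | h
            · exact Or.inl h
            · exact Or.inr (Or.inl ⟨h, rfl⟩)
            · exact (hcon.1 h).elim)
        (Or.inr (Or.inl ⟨b01, rfl⟩))
        (by rcases k' 1 1 with h | h | h
            · exact Or.inl h
            · exact Or.inr (Or.inl ⟨h, rfl⟩)
            · exact (hcon.2 h).elim)
        (Or.inr ⟨b12, rfl⟩) rfl
      omega
    rcases hz with hz | hz
    · left
      exact ⟨hAC, h22, hi3, h01, Or.inr (Or.inr (Or.inr ⟨hz, b01, b12⟩))⟩
    · right
      unfold Pat
      have h01' : ∀ i j, br (Equiv.swap (0 : Fin 4) 1 i) (Equiv.swap (0 : Fin 4) 1 j) ≠ some 1 ∧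
          br (Equiv.swap (0 : Fin 4) 1 i) (Equiv.swap (0 : Fin 4) 1 j) ≠ some 0 :=
        fun i j => ⟨(h01 _ _).2, (h01 _ _).1⟩
      have w2 : Equiv.swap (0 : Fin 4) 1 2 = 2 := by decide
      have w3 : Equiv.swap (0 : Fin 4) 1 3 = 3 := by decide
      simp only [ne_eq, tr_some, tr_none, Equiv.swap_apply_left, Equiv.swap_apply_right, w2, w3]
      exact ⟨b12, h22, fun i => hi3 _, h01', Or.inr (Or.inr (Or.inr ⟨hz, s10.trans b01, hAC⟩))⟩

lemma comb_pat {br : Fin 4 → Fin 4 → Option (Fin 4)} {l : Fin 4 → ℕ} (h : Comb br l) :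
    ∃ e, Pat (tr e br) := by
  obtain ⟨e, h0, h1, h2, h3⟩ := levels h
  have h' := h.tr e
  obtain ⟨p, q, hp, hq, hc⟩ := h'.down 3 1 h3
  have hq2 : q = 2 := by
    fin_cases q <;> simp_all
  subst hq2
  have hp2 : p = 0 ∨ p = 1 := by
    fin_cases p <;> simp_all
  rcases hp2 with rfl | rfl
  · rcases comb_pat' h' h0 h1 h2 h3 hc with hh | hh
    · exact ⟨_, hh⟩
    · rw [tr_tr] at hh; exact ⟨_, hh⟩
  · have w2 : Equiv.swap (0 : Fin 4) 1 2 = 2 := by decide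
    have w3 : Equiv.swap (0 : Fin 4) 1 3 = 3 := by decide
    have hh := comb_pat' (h'.tr (Equiv.swap 0 1)) (by simpa using h1) (by simpa using h0)
      (by simpa [w2] using h2) (by simpa [w3] using h3) (by rw [tr_some]; simpa [w2, w3] using hc)
    rw [tr_tr, tr_tr] at hh
    rcases hh with hh | hh
    · exact ⟨_, hh⟩
    · exact ⟨_, hh⟩

end comb
end Symp

namespace Symp
section lie
variable {g : Type*} [LieRing g] [LieAlgebra ℂ g]

open Classical in
noncomputable def brk (V : Fin 4 → Submodule ℂ g) (i j : Fin 4) : Option (Fin 4) :=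
  if h : ∃ q, lieSpan2 g (V i) (V j) = V q then some h.choose else none

structure Setup (s : LieSubalgebra ℂ g) (V : Fin 4 → Submodule ℂ g) : Prop where
  symp : IsSympathetic g
  levi : IsSimpleLevi g s
  dec : IsDecomp g s V
  conv : Convention g V

variable {s : LieSubalgebra ℂ g} {V : Fin 4 → Submodule ℂ g}

lemma Setup.mem_of_le (h : Setup s V) {q : Fin 4} {S : Set (Fin 4)} (hq : V q ≤ ⨆ i ∈ S, V i) :
    q ∈ S := by
  by_contra hcon
  have := h.dec.2.1.disjoint_biSup hcon
  exact (h.dec.1 q).1 (by simpa using this.mono_right (le_of_eq rfl) |>.eq_bot_of_le hq)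

lemma Setup.inj (h : Setup s V) {p q : Fin 4} (hpq : V p = V q) : p = q := by
  have := h.mem_of_le (q := p) (S := {q}) (by simp [hpq])
  simpa using this

lemma Setup.brk_some (h : Setup s V) {i j q : Fin 4} :
    brk V i j = some q ↔ lieSpan2 g (V i) (V j) = V q := by
  unfold brk
  constructor
  · intro h1
    split_ifs at h1 with h2
    · rw [← Option.some_inj.1 h1]; exact h2.choose_spec
  · intro h1
    have h2 : ∃ q, lieSpan2 g (V i) (V j) = V q := ⟨q, h1⟩
    rw [dif_pos h2, Option.some_inj]
    exact h.inj (h2.choose_spec.symm.trans h1)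

lemma Setup.brk_none (h : Setup s V) {i j : Fin 4} :
    brk V i j = none ↔ lieSpan2 g (V i) (V j) = ⊥ := by
  constructor
  · intro h1
    by_contra h2
    obtain ⟨q, hq, -⟩ := h.conv i j h2
    have hq := h.brk_some.2 hq
    rw [hq] at h1; cases h1
  · intro h1
    rcases hq : brk V i j with _ | q
    · rfl
    · rw [h.brk_some, h1] at hq
      exact ((h.dec.1 q).1 hq.symm).elim

lemma lieSpan2_iSup_le {ι : Type*} {A B : ι → Submodule ℂ g} {S : Set ι} {W : Submodule ℂ g}
    (h : ∀ i, ∀ j ∈ S, lieSpan2 g (A i) (B j) ≤ W) :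
    lieSpan2 g (⨆ i, A i) (⨆ j ∈ S, B j) ≤ W := by
  rw [lieSpan2_le]
  intro x hx y hy
  refine Submodule.iSup_induction A (motive := fun x => ⁅x, y⁆ ∈ W) hx ?_ ?_ ?_
  · intro i x hx
    have : ⨆ j ∈ S, B j ≤ W.comap (LieModule.toEnd ℂ g g x) := by
      refine iSup₂_le fun j hj b hb => ?_
      exact h i j hj (lie_mem_lieSpan2 hx hb)
    exact this hy
  · simp
  · intro a b ha hb; rw [add_lie]; exact add_mem ha hb

lemma Setup.lc_eq (h : Setup s V) (n : ℕ) : lc g n = ⨆ i ∈ {i | V i ≤ lc g n}, V i := by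
  apply le_antisymm
  swap
  · exact iSup₂_le fun i hi => hi
  cases n with
  | zero =>
    change (LieAlgebra.radical ℂ g).toSubmodule ≤ _
    rw [← h.dec.2.2]
    refine iSup_le fun i => ?_
    refine le_iSup₂_of_le i ?_ le_rfl
    change V i ≤ (LieAlgebra.radical ℂ g).toSubmodule
    rw [← h.dec.2.2]
    exact le_iSup V i
  | succ n =>
    have ih := h.lc_eq n
    conv_lhs => rw [lc, ← h.dec.2.2, ih]
    refine lieSpan2_iSup_le fun i j hj => ?_
    rcases hq : brk V i j with _ | q
    · rw [h.brk_none.1 hq]; exact bot_le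
    · have h1 := h.brk_some.1 hq
      rw [h1]
      refine le_iSup₂_of_le q ?_ le_rfl
      change V q ≤ _
      rw [← h1]
      refine lieSpan2_mono ?_ hj
      rw [← h.dec.2.2]
      exact le_iSup V i

lemma Setup.lc_down (h : Setup s V) {q : Fin 4} {n : ℕ} (hq : V q ≤ lc g (n+1)) :
    ∃ i j, V j ≤ lc g n ∧ brk V i j = some q := by
  have h1 : lc g (n+1) ≤ ⨆ p ∈ {p | ∃ i j, V j ≤ lc g n ∧ brk V i j = some p}, V p := by
    conv_lhs => rw [lc, ← h.dec.2.2, h.lc_eq n]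
    refine lieSpan2_iSup_le fun i j hj => ?_
    rcases hq : brk V i j with _ | q
    · rw [h.brk_none.1 hq]; exact bot_le
    · rw [h.brk_some.1 hq]
      exact le_iSup₂_of_le q ⟨i, j, hj, hq⟩ le_rfl
  exact h.mem_of_le (hq.trans h1)

lemma Setup.exists_level [FiniteDimensional ℂ g] (h : Setup s V) :
    ∃ l : Fin 4 → ℕ, ∀ i n, V i ≤ lc g n ↔ n ≤ l i := by
  obtain ⟨N, hN⟩ := lc_nilpotent h.symp.2.1
  have : ∀ i, ∃ l, ∀ n, V i ≤ lc g n ↔ n ≤ l := by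
    intro i
    have hex : ∃ n, ¬ V i ≤ lc g n := ⟨N, by rw [hN, le_bot_iff]; exact (h.dec.1 i).1⟩
    classical
    have h0 : V i ≤ lc g 0 := by
      change V i ≤ (LieAlgebra.radical ℂ g).toSubmodule
      rw [← h.dec.2.2]
      exact le_iSup V i
    have hpos : Nat.find hex ≠ 0 := by
      intro h1
      have := Nat.find_spec hex
      rw [h1] at this; exact this h0
    refine ⟨Nat.find hex - 1, fun n => ?_⟩
    constructor
    · intro hn
      by_contra hlt
      exact Nat.find_spec hex (hn.trans (lc_anti (by omega)))
    · intro hn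
      by_contra hlt
      have := Nat.find_min' hex hlt
      omega
  choose l hl using this
  exact ⟨l, hl⟩

/-- the five pieces -/
def pieces (s : LieSubalgebra ℂ g) (V : Fin 4 → Submodule ℂ g) : Option (Fin 4) → Submodule ℂ g
  | none => s.toSubmodule
  | some i => V i

lemma Setup.pieces_ind (h : Setup s V) : iSupIndep (pieces s V) := by
  have hle : ∀ i : Fin 4, (⨆ (j : Option (Fin 4)) (_ : j ≠ some i), pieces s V j) ≤
      (⨆ (j : Fin 4) (_ : j ≠ i), V j) ⊔ s.toSubmodule := by
    intro i
    refine iSup₂_le fun j hj => ?_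
    cases j with
    | none => exact le_sup_right
    | some j =>
      exact le_sup_of_le_left (le_iSup₂_of_le (f := fun j (_ : j ≠ i) => V j) j
        (by simpa using hj) le_rfl)
  have hrad : ∀ i, V i ≤ (LieAlgebra.radical ℂ g).toSubmodule := by
    intro i; rw [← h.dec.2.2]; exact le_iSup V i
  rw [iSupIndep_def]
  intro i
  cases i with
  | none =>
    refine h.levi.2.disjoint.mono_right ?_
    refine iSup₂_le fun j hj => ?_
    cases j with
    | none => exact (hj rfl).elim
    | some j => exact hrad j
  | some i =>
    refine Disjoint.mono_right (hle i) ?_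
    refine Disjoint.disjoint_sup_right_of_disjoint_sup_left (h.dec.2.1 i) ?_
    refine h.levi.2.disjoint.symm.mono_left ?_
    exact sup_le (hrad i) (iSup₂_le fun j _ => hrad j)

lemma Setup.pieces_top (h : Setup s V) : (⨆ i, pieces s V i) = ⊤ := by
  rw [iSup_option]
  change s.toSubmodule ⊔ ⨆ i, V i = ⊤
  rw [h.dec.2.2]
  exact h.levi.2.sup_eq_top

lemma Setup.exists_lin (h : Setup s V) (φ : ∀ i, pieces s V i →ₗ[ℂ] g) :
    ∃ D : g →ₗ[ℂ] g, ∀ i (x : pieces s V i), D x = φ i x := by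
  classical
  have hinternal := (DirectSum.isInternal_submodule_iff_iSupIndep_and_iSup_eq_top _).2
    ⟨h.pieces_ind, h.pieces_top⟩
  let E := LinearEquiv.ofBijective (DirectSum.coeLinearMap (pieces s V)) hinternal
  refine ⟨(DirectSum.toModule ℂ _ g φ) ∘ₗ E.symm.toLinearMap, fun i x => ?_⟩
  have : E.symm (x : g) = DirectSum.lof ℂ _ (fun i => pieces s V i) i x := by
    rw [LinearEquiv.symm_apply_eq]
    change (x : g) = DirectSum.coeLinearMap (pieces s V) _
    rw [DirectSum.coeLinearMap_lof]
  simp [this]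

lemma Setup.ind_all (h : Setup s V) (P : g → Prop) (h1 : ∀ i, ∀ x ∈ pieces s V i, P x)
    (h0 : P 0) (ha : ∀ x y, P x → P y → P (x + y)) (x : g) : P x := by
  have hx : x ∈ ⨆ i, pieces s V i := by rw [h.pieces_top]; trivial
  exact Submodule.iSup_induction _ (motive := P) hx h1 h0 ha

lemma Setup.inner (h : Setup s V) (D : g →ₗ[ℂ] g)
    (hD : ∀ i j, ∀ x ∈ pieces s V i, ∀ y ∈ pieces s V j, D ⁅x, y⁆ = ⁅D x, y⁆ + ⁅x, D y⁆) :
    ∃ x : g, ∀ y : g, D y = ⁅x, y⁆ := by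
  have h1 : ∀ x y : g, D ⁅x, y⁆ = ⁅D x, y⁆ + ⁅x, D y⁆ := by
    intro x y
    refine h.ind_all (fun x => D ⁅x, y⁆ = ⁅D x, y⁆ + ⁅x, D y⁆) ?_ (by simp) ?_ x
    · intro i x hx
      refine h.ind_all (fun y => D ⁅x, y⁆ = ⁅D x, y⁆ + ⁅x, D y⁆) ?_ (by simp) ?_ y
      · intro j y hy
        exact hD i j x hx y hy
      · intro a b ha hb
        simp only [lie_add, map_add, ha, hb]; abel
    · intro a b ha hb
      simp only [add_lie, map_add, ha, hb]; abel
  let D' : LieDerivation ℂ g g :=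
    { D with
      leibniz' := by
        intro a b
        change D ⁅a, b⁆ = ⁅a, D b⁆ - ⁅b, D a⁆
        rw [h1, ← lie_skew b (D a)]; abel }
  exact h.symp.2.2 D'


lemma Setup.le_rad (h : Setup s V) (i : Fin 4) : V i ≤ (LieAlgebra.radical ℂ g).toSubmodule := by
  rw [← h.dec.2.2]; exact le_iSup V i

lemma Setup.inv (h : Setup s V) {i : Fin 4} {x v : g} (hx : x ∈ s) (hv : v ∈ V i) :
    ⁅x, v⁆ ∈ V i := (h.dec.1 i).2.1 x hx v hv

lemma Setup.centralizer (h : Setup s V) {x : g} (hx : ∀ y ∈ s, ⁅x, y⁆ = 0) :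
    x ∈ LieAlgebra.radical ℂ g := by
  have := h.levi.1
  have hx1 : x ∈ s.toSubmodule ⊔ (LieAlgebra.radical ℂ g).toSubmodule := by
    rw [h.levi.2.sup_eq_top]; trivial
  obtain ⟨y, hy, w, hw, rfl⟩ := Submodule.mem_sup.1 hx1
  have hyc : ∀ z ∈ s, ⁅y, z⁆ = 0 := by
    intro z hz
    have h1 := hx z hz
    rw [add_lie] at h1
    have h2 : ⁅y, z⁆ ∈ s.toSubmodule := s.lie_mem hy hz
    have h3 : ⁅y, z⁆ ∈ (LieAlgebra.radical ℂ g).toSubmodule := by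
      rw [eq_neg_of_add_eq_zero_left h1]
      exact neg_mem (lie_mem_left ℂ g _ w z hw)
    exact (Submodule.disjoint_def.1 h.levi.2.disjoint) _ h2 h3
  have hc : (⟨y, hy⟩ : s) ∈ LieAlgebra.center ℂ s := by
    rw [LieModule.mem_maxTrivSubmodule]
    intro z
    apply Subtype.ext
    change ⁅(z : g), y⁆ = 0
    rw [← lie_skew, hyc z z.2, neg_zero]
  rw [LieAlgebra.center_eq_bot] at hc
  have : y = 0 := congrArg Subtype.val ((LieSubmodule.mem_bot _).1 hc)
  rw [this, zero_add]
  exact hw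

lemma Setup.pieces_br (h : Setup s V) {i j : Fin 4} {x y : g} (hx : x ∈ V i) (hy : y ∈ V j) :
    ⁅x, y⁆ = 0 ∨ ∃ q, brk V i j = some q ∧ ⁅x, y⁆ ∈ V q := by
  rcases hq : brk V i j with _ | q
  · left
    exact lieSpan2_eq_bot.1 (h.brk_none.1 hq) x hx y hy
  · right
    refine ⟨q, rfl, ?_⟩
    rw [← h.brk_some.1 hq]; exact lie_mem_lieSpan2 hx hy

lemma Setup.comb [FiniteDimensional ℂ g] (h : Setup s V) : ∃ l, Comb (brk V) l := by
  obtain ⟨l, hl⟩ := h.exists_level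
  have up : ∀ i j q, brk V i j = some q → l i + l j + 1 ≤ l q := by
    intro i j q hq
    rw [← hl, ← h.brk_some.1 hq, lieSpan2_le]
    intro x hx y hy
    exact lc_lie _ _ x ((hl i _).2 le_rfl hx) y ((hl j _).2 le_rfl hy)
  refine ⟨l, ?_, up, ?_, ?_, ?_⟩
  · intro i j
    rcases hq : brk V j i with _ | q
    · rw [h.brk_none] at hq ⊢
      rw [lieSpan2_comm, hq]
    · rw [h.brk_some] at hq ⊢
      rw [lieSpan2_comm, hq]
  · intro q n hn
    obtain ⟨i, j, h1, h2⟩ := h.lc_down (q := q) (n := n) ((hl _ _).2 hn.ge)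
    rw [hl] at h1
    have := up _ _ _ h2
    exact ⟨i, j, by omega, by omega, h2⟩
  · intro d hd
    obtain ⟨D, hD⟩ := h.exists_lin (fun i => match i with
      | none => 0
      | some i => (d i : ℂ) • (V i).subtype)
    have hD0 : ∀ x ∈ s, D x = 0 := fun x hx => hD none ⟨x, hx⟩
    have hDi : ∀ i, ∀ x ∈ V i, D x = (d i : ℂ) • x := fun i x hx => hD (some i) ⟨x, hx⟩
    obtain ⟨x, hx⟩ := h.inner D (by
      intro i j x hx y hy
      rcases i with _ | i <;> rcases j with _ | j
      · rw [hD0 x hx, hD0 y hy, hD0 _ (s.lie_mem hx hy)]; simp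
      · rw [hD0 x hx, hDi j y hy, hDi j _ (h.inv hx hy)]; simp
      · rw [hD0 y hy, hDi i x hx, hDi i ⁅x, y⁆]
        · simp
        · rw [← lie_skew]; exact neg_mem (h.inv hy hx)
      · rw [hDi i x hx, hDi j y hy]
        rcases h.pieces_br hx hy with h0 | ⟨q, hq, hm⟩
        · simp [h0]
        · rw [hDi q _ hm, ← hd i j q hq]
          simp [add_smul])
    have hxr := h.centralizer (x := x) (fun y hy => by rw [← hx, hD0 y hy])
    funext i
    by_contra hne
    have : V i ≤ lc g (l i + 1) := by
      intro v hv
      have h1 : (d i : ℂ) • v ∈ lc g (l i + 1) := by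
        rw [← hDi i v hv, hx]
        exact lie_mem_lieSpan2 hxr ((hl i _).2 le_rfl hv)
      have hne' : (d i : ℂ) ≠ 0 := by exact_mod_cast hne
      have := Submodule.smul_mem _ ((d i : ℂ)⁻¹) h1
      rwa [smul_smul, inv_mul_cancel₀ hne', one_smul] at this
    rw [hl] at this
    omega
  · intro i j k c z hc hz
    by_contra hcon
    push Not at hcon
    obtain ⟨h1, h2⟩ := hcon
    rw [h.brk_some] at hc hz
    apply (h.dec.1 z).1
    rw [← hz, ← hc, ← le_bot_iff]
    have key : ∀ {a b c : Fin 4}, (∀ m, brk V b c = some m → brk V a m = none) →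
        ∀ x ∈ V a, ∀ y ∈ V b, ∀ w ∈ V c, ⁅x, ⁅y, w⁆⁆ = 0 := by
      intro a b c hm x hx y hy w hw
      rcases h.pieces_br hy hw with h0 | ⟨m, hm', hmm⟩
      · simp [h0]
      · exact lieSpan2_eq_bot.1 (h.brk_none.1 (hm m hm')) x hx _ hmm
    rw [lieSpan2_le]
    intro x hx y hy
    unfold lieSpan2 at hx
    induction hx using Submodule.span_induction with
    | mem a ha =>
      obtain ⟨p, hp, q, hq, rfl⟩ := ha
      rw [lie_lie, key h1 p hp q hq y hy, key h2 q hq p hp y hy]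
      simp
    | zero => simp
    | add a b _ _ ha hb => rw [add_lie]; exact add_mem ha hb
    | smul c a _ ha => rw [smul_lie]; exact Submodule.smul_mem _ _ ha

/-- All the structural information, after renumbering. -/
structure Data (s : LieSubalgebra ℂ g) (V : Fin 4 → Submodule ℂ g) : Prop extends Setup s V where
  nt0 : ∃ x ∈ s, ∃ v ∈ V 0, ⁅x, v⁆ ≠ 0
  nt1 : ∃ x ∈ s, ∃ v ∈ V 1, ⁅x, v⁆ ≠ 0
  nt3 : ∃ x ∈ s, ∃ v ∈ V 3, ⁅x, v⁆ ≠ 0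
  b02 : lieSpan2 g (V 0) (V 2) = V 3
  b22 : lieSpan2 g (V 2) (V 2) = ⊥
  bi3 : ∀ i, lieSpan2 g (V i) (V 3) = ⊥
  der : ∀ φ : V 0 →ₗ[ℂ] g, (∀ a, φ a ∈ V 3) →
    (∀ x ∈ s, ∀ a b : V 0, (b : g) = ⁅x, (a : g)⁆ → φ b = ⁅x, φ a⁆) →
    ∃ x : g, (∀ y ∈ s, ⁅x, y⁆ = 0) ∧ ∀ a : V 0, φ a = ⁅x, (a : g)⁆
  pat : (lieSpan2 g (V 0) (V 0) = V 2 ∧ lieSpan2 g (V 0) (V 1) = V 2 ∧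
          lieSpan2 g (V 1) (V 1) = V 3 ∧ lieSpan2 g (V 1) (V 2) = ⊥) ∨
        (lieSpan2 g (V 0) (V 0) = V 2 ∧ lieSpan2 g (V 0) (V 1) = V 3 ∧
          lieSpan2 g (V 1) (V 1) = V 3 ∧ lieSpan2 g (V 1) (V 2) = ⊥) ∨
        (lieSpan2 g (V 0) (V 0) = V 3 ∧ lieSpan2 g (V 0) (V 1) = V 2 ∧
          lieSpan2 g (V 1) (V 1) = V 3 ∧ lieSpan2 g (V 1) (V 2) = ⊥) ∨
        (lieSpan2 g (V 0) (V 0) = V 3 ∧ lieSpan2 g (V 0) (V 1) = V 2 ∧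
          lieSpan2 g (V 1) (V 2) = V 3)

lemma Setup.perm (h : Setup s V) (e : Equiv.Perm (Fin 4)) : Setup s (V ∘ e) where
  symp := h.symp
  levi := h.levi
  dec := ⟨fun i => h.dec.1 _, h.dec.2.1.comp e.injective, by
    rw [← h.dec.2.2]; exact e.iSup_comp (g := V)⟩
  conv := by
    intro i j hij
    obtain ⟨q, hq, hu⟩ := h.conv (e i) (e j) hij
    refine ⟨e.symm q, by simpa using hq, ?_⟩
    intro q' hq'
    rw [← hu (e q') hq']; simp

lemma Setup.brk_perm (h : Setup s V) (e : Equiv.Perm (Fin 4)) : brk (V ∘ e) = tr e (brk V) := by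
  funext i j
  rcases hq : tr e (brk V) i j with _ | q
  · rw [tr_none, h.brk_none] at hq
    exact (h.perm e).brk_none.2 hq
  · rw [tr_some, h.brk_some] at hq
    exact (h.perm e).brk_some.2 hq

lemma Setup.nontriv_of_top (h : Setup s V) (i : Fin 4) (hi : ∀ a b, brk V a b ≠ some i) :
    ∃ x ∈ s, ∃ v ∈ V i, ⁅x, v⁆ ≠ 0 := by
  by_contra hcon
  push Not at hcon
  let P : Submodule ℂ g := ⨆ j ∈ {j | j ≠ some i}, pieces s V j
  have hle : ∀ j, j ≠ some i → pieces s V j ≤ P := fun j hj =>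
    le_iSup₂_of_le (f := fun j (_ : j ∈ {j | j ≠ some i}) => pieces s V j) j hj le_rfl
  have hsv : ∀ j, ∀ x ∈ s, ∀ v ∈ V j, ⁅x, v⁆ ∈ P := by
    intro j x hx v hv
    by_cases hj : j = i
    · subst hj; rw [hcon x hx v hv]; exact zero_mem _
    · exact hle (some j) (by simpa using hj) (h.inv hx hv)
  have hbr : ∀ x y : g, ⁅x, y⁆ ∈ P := by
    intro x y
    refine h.ind_all (fun x => ⁅x, y⁆ ∈ P) ?_ (by simp) ?_ x
    · intro a x hx
      refine h.ind_all (fun y => ⁅x, y⁆ ∈ P) ?_ (by simp) ?_ y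
      · intro b y hy
        rcases a with _ | a <;> rcases b with _ | b
        · exact hle none (by simp) (s.lie_mem hx hy)
        · exact hsv b x hx y hy
        · rw [← lie_skew]; exact neg_mem (hsv a y hy x hx)
        · rcases h.pieces_br hx hy with h0 | ⟨m, hm', hmm⟩
          · rw [h0]; exact zero_mem _
          · refine hle (some m) ?_ hmm
            intro hmi
            rw [Option.some_inj.1 hmi] at hm'
            exact hi a b hm'
      · intro a b ha hb; rw [lie_add]; exact add_mem ha hb
    · intro a b ha hb; rw [add_lie]; exact add_mem ha hb
  have hT : P = ⊤ := by
    rw [eq_top_iff]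
    have hp := h.symp.2.1
    unfold IsPerfectLie at hp
    have h2 : (⁅(⊤ : LieIdeal ℂ g), (⊤ : LieIdeal ℂ g)⁆ : LieIdeal ℂ g).toSubmodule = ⊤ := by
      rw [hp]; rfl
    rw [LieSubmodule.lieIdeal_oper_eq_linear_span'] at h2
    rw [← h2, Submodule.span_le]
    rintro z ⟨a, -, b, -, rfl⟩
    exact hbr a b
  have hd := h.pieces_ind.disjoint_biSup (x := some i) (y := {j | j ≠ some i}) (by simp)
  change Disjoint (V i) P at hd
  rw [hT, disjoint_top] at hd
  exact (h.dec.1 i).1 hd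

lemma Setup.exists_data [FiniteDimensional ℂ g] (h : Setup s V) :
    ∃ e : Equiv.Perm (Fin 4), Data s (V ∘ e) := by
  obtain ⟨l, hl⟩ := h.comb
  obtain ⟨e, he⟩ := comb_pat hl
  rw [← h.brk_perm] at he
  have h' := h.perm e
  refine ⟨e, ?_⟩
  generalize V ∘ e = V at h' he
  clear hl h
  obtain ⟨h1, h2, h3, h4, h5⟩ := he
  have bi3 : ∀ i, lieSpan2 g (V i) (V 3) = ⊥ := fun i => h'.brk_none.1 (h3 i)
  refine { h' with
    nt0 := h'.nontriv_of_top 0 fun a b => (h4 a b).1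
    nt1 := h'.nontriv_of_top 1 fun a b => (h4 a b).2
    b02 := h'.brk_some.1 h1
    b22 := h'.brk_none.1 h2
    bi3 := bi3
    nt3 := ?_
    der := ?_
    pat := ?_ }
  · by_contra hcon
    push Not at hcon
    apply (h'.dec.1 3).1
    rw [eq_bot_iff]
    intro z hz
    have : z ∈ LieAlgebra.center ℂ g := by
      rw [LieModule.mem_maxTrivSubmodule]
      intro x
      refine h'.ind_all (fun x => ⁅x, z⁆ = 0) ?_ (by simp) ?_ x
      · intro i x hx
        rcases i with _ | i
        · exact hcon x hx z hz
        · exact lieSpan2_eq_bot.1 (bi3 i) x hx z hz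
      · intro a b ha hb; rw [add_lie, ha, hb, add_zero]
    rw [h'.symp.1] at this
    simpa using this
  · intro φ hφ heq
    have h3i : ∀ i, ∀ x ∈ V 3, ∀ y ∈ V i, ⁅x, y⁆ = 0 := by
      intro i x hx y hy
      rw [← lie_skew, lieSpan2_eq_bot.1 (bi3 i) y hy x hx, neg_zero]
    obtain ⟨D, hD⟩ := h'.exists_lin (fun i => match i with
      | some 0 => φ
      | _ => 0)
    have hDs : ∀ x ∈ s, D x = 0 := fun x hx => hD none ⟨x, hx⟩
    have hD0 : ∀ x : V 0, D x = φ x := fun x => hD (some 0) x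
    have hDn : ∀ i, i ≠ 0 → ∀ x ∈ V i, D x = 0 := by
      intro i hi x hx
      fin_cases i
      · exact (hi rfl).elim
      · exact hD (some 1) ⟨x, hx⟩
      · exact hD (some 2) ⟨x, hx⟩
      · exact hD (some 3) ⟨x, hx⟩
    have hDi : ∀ i, ∀ x ∈ V i, D x ∈ V 3 := by
      intro i x hx
      by_cases hi : i = 0
      · subst hi; rw [hD0 ⟨x, hx⟩]; exact hφ _
      · rw [hDn i hi x hx]; exact zero_mem _
    have hDsv : ∀ x ∈ s, ∀ j, ∀ y ∈ V j, D ⁅x, y⁆ = ⁅x, D y⁆ := by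
      intro x hx j y hy
      by_cases hj : j = 0
      · subst hj
        rw [hD0 ⟨y, hy⟩, hD0 ⟨⁅x, y⁆, h'.inv hx hy⟩]
        exact heq x hx _ _ rfl
      · rw [hDn j hj y hy, hDn j hj _ (h'.inv hx hy), lie_zero]
    obtain ⟨x, hx⟩ := h'.inner D (by
      intro i j x hx y hy
      rcases i with _ | i <;> rcases j with _ | j
      · rw [hDs x hx, hDs y hy, hDs _ (s.lie_mem hx hy)]; simp
      · rw [hDs x hx, hDsv x hx j y hy]; simp
      · rw [hDs y hy, ← lie_skew, map_neg, hDsv y hy i x hx, lie_skew]; simp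
      · rw [h3i j _ (hDi i x hx) y hy, lieSpan2_eq_bot.1 (bi3 i) x hx _ (hDi j y hy), add_zero]
        rcases h'.pieces_br hx hy with h0 | ⟨q, hq, hm⟩
        · simp [h0]
        · refine hDn q ?_ _ hm
          rintro rfl
          exact (h4 i j).1 hq)
    refine ⟨x, fun y hy => by rw [← hx, hDs y hy], fun a => by rw [← hx, hD0]⟩
  · simp only [h'.brk_some, h'.brk_none] at h5
    exact h5

end lie
end Symp

namespace Symp
section sl2
variable {g : Type*} [LieRing g] [LieAlgebra ℂ g]

/-- Eigenvalue of maximal real part on an invariant subspace. -/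
lemma exists_max_eigen [FiniteDimensional ℂ g] (W : Submodule ℂ g) (hW : W ≠ ⊥) (H : g)
    (hH : ∀ w ∈ W, ⁅H, w⁆ ∈ W) :
    ∃ μ : ℂ, (∃ w ∈ W, w ≠ 0 ∧ ⁅H, w⁆ = μ • w) ∧
      ∀ ν : ℂ, μ.re < ν.re → ∀ w ∈ W, ⁅H, w⁆ = ν • w → w = 0 := by
  let T : Module.End ℂ W := (LieModule.toEnd ℂ g g H).restrict hH
  have hnt : Nontrivial W := Submodule.nontrivial_iff_ne_bot.2 hW
  have hfin : (Set.univ : Set T.Eigenvalues).Finite := Set.finite_univ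
  have hne : (Set.univ : Set T.Eigenvalues).Nonempty := ⟨default, trivial⟩
  obtain ⟨μ, -, hμ⟩ := Set.exists_max_image Set.univ (fun μ : T.Eigenvalues => (μ : ℂ).re) hfin hne
  refine ⟨μ, ?_, ?_⟩
  · obtain ⟨w, hw⟩ := Module.End.HasEigenvalue.exists_hasEigenvector (f := T) (μ := (μ : ℂ)) μ.2
    refine ⟨w, w.2, by simpa using hw.2, ?_⟩
    have := hw.apply_eq_smul
    exact congrArg Subtype.val this
  · intro ν hν w hw hwν
    by_contra hw0
    have hv : T.HasEigenvalue ν := by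
      refine Module.End.hasEigenvalue_of_hasEigenvector (x := ⟨w, hw⟩) ?_
      rw [Module.End.hasEigenvector_iff, Module.End.mem_eigenspace_iff]
      exact ⟨Subtype.ext hwν, by simpa using hw0⟩
    have := hμ ⟨ν, hv⟩ trivial
    exact absurd hν (not_lt.2 this)

/-- descending vectors -/
noncomputable def Fp (f : g) (t : ℕ) (v : g) : g := ((LieModule.toEnd ℂ g g f) ^ t) v

structure Irr (e f h : g) (V : Submodule ℂ g) (n : ℕ) (v : g) : Prop where
  span : V = Submodule.span ℂ (Set.range fun t : Fin (n+1) => Fp f t v)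
  li : LinearIndependent ℂ (fun t : Fin (n+1) => Fp f t v)
  hh : ∀ t, ⁅h, Fp f t v⁆ = ((n : ℂ) - 2 * t) • Fp f t v
  he0 : ⁅e, v⁆ = 0
  he : ∀ t, ⁅e, Fp f (t+1) v⁆ = (((t : ℂ) + 1) * (n - t)) • Fp f t v
  top : ∀ t, n < t → Fp f t v = 0

lemma Fp_succ (f v : g) (t : ℕ) : Fp f (t+1) v = ⁅f, Fp f t v⁆ := by
  unfold Fp; simp [pow_succ']

lemma Fp_zero (f v : g) : Fp f 0 v = v := by simp [Fp]

lemma exists_irr [FiniteDimensional ℂ g] {s : LieSubalgebra ℂ g} {e f h : g}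
    (t : IsSl2Triple h e f) (hspan : s.toSubmodule = Submodule.span ℂ {e, f, h})
    {V : Submodule ℂ g} (hV : IsIrreducibleSMod g s V) : ∃ n v, Irr e f h V n v := by
  have hes : e ∈ s := by
    change e ∈ s.toSubmodule; rw [hspan]; exact Submodule.subset_span (by simp)
  have hfs : f ∈ s := by
    change f ∈ s.toSubmodule; rw [hspan]; exact Submodule.subset_span (by simp)
  have hhs : h ∈ s := by
    change h ∈ s.toSubmodule; rw [hspan]; exact Submodule.subset_span (by simp)
  obtain ⟨h0, hinv, hmin⟩ := hV
  obtain ⟨μ, ⟨v, hv, hv0, hvμ⟩, hmax⟩ := exists_max_eigen V h0 h (hinv h hhs)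
  have hev : ⁅e, v⁆ = 0 := by
    refine hmax (μ + 2) (by simp) _ (hinv e hes v hv) ?_
    rw [leibniz_lie, t.lie_h_e_smul ℂ, hvμ, lie_smul, smul_lie, ← add_smul, add_comm]
  have P : t.HasPrimitiveVectorWith v μ := ⟨hv0, hvμ, hev⟩
  obtain ⟨n, rfl⟩ := P.exists_nat
  have top1 : Fp f (n+1) v = 0 := P.pow_toEnd_f_eq_zero_of_eq_nat rfl
  have top : ∀ t, n < t → Fp f t v = 0 := by
    intro t ht
    obtain ⟨k, rfl⟩ := Nat.exists_eq_add_of_le ht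
    induction k with
    | zero => exact top1
    | succ k ih => rw [← add_assoc, Fp_succ, ih (by omega), lie_zero]
  have hh : ∀ t, ⁅h, Fp f t v⁆ = ((n : ℂ) - 2 * t) • Fp f t v := P.lie_h_pow_toEnd_f
  have he : ∀ t, ⁅e, Fp f (t+1) v⁆ = (((t : ℂ) + 1) * (n - t)) • Fp f t v :=
    P.lie_e_pow_succ_toEnd_f
  have hmem : ∀ t, Fp f t v ∈ V := by
    intro t
    induction t with
    | zero => rwa [Fp_zero]
    | succ t ih => rw [Fp_succ]; exact hinv f hfs _ ih
  have li : LinearIndependent ℂ (fun t : Fin (n+1) => Fp f t v) := by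
    refine Module.End.eigenvectors_linearIndependent' (LieModule.toEnd ℂ g g h)
      (fun t : Fin (n+1) => (n : ℂ) - 2 * t) ?_ _ ?_
    · intro a b hab
      simp only at hab
      have : ((a : ℕ) : ℂ) = (b : ℕ) := by linear_combination (-1/2 : ℂ) * hab
      exact Fin.ext (by exact_mod_cast this)
    · intro a
      rw [Module.End.hasEigenvector_iff, Module.End.mem_eigenspace_iff]
      exact ⟨hh a, P.pow_toEnd_f_ne_zero_of_eq_nat rfl (by omega)⟩
  refine ⟨n, v, ?_, li, hh, hev, he, top⟩
  let S := Submodule.span ℂ (Set.range fun t : Fin (n+1) => Fp f t v)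
  have hS : ∀ t, Fp f t v ∈ S := by
    intro t
    by_cases ht : n < t
    · rw [top t ht]; exact zero_mem _
    · exact Submodule.subset_span ⟨⟨t, by omega⟩, rfl⟩
  have hpres : ∀ x : g, (∀ t, ⁅x, Fp f t v⁆ ∈ S) → ∀ w ∈ S, ⁅x, w⁆ ∈ S := by
    intro x hx w hw
    have : S ≤ S.comap (LieModule.toEnd ℂ g g x) := by
      rw [Submodule.span_le]
      rintro _ ⟨t, rfl⟩
      exact hx t
    exact this hw
  have hSV : S = V := by
    refine (hmin S ?_ ?_).resolve_left ?_
    · rw [Submodule.span_le]; rintro _ ⟨t, rfl⟩; exact hmem t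
    · intro x hx w hw
      have hx' : x ∈ Submodule.span ℂ {e, f, h} := by rw [← hspan]; exact hx
      rw [Submodule.mem_span_triple] at hx'
      obtain ⟨a, b, c, rfl⟩ := hx'
      simp only [add_lie, smul_lie]
      refine add_mem (add_mem ?_ ?_) ?_ <;> refine Submodule.smul_mem _ _ ?_
      · refine hpres e ?_ w hw
        intro t
        cases t with
        | zero => rw [Fp_zero, hev]; exact zero_mem _
        | succ t => rw [he]; exact Submodule.smul_mem _ _ (hS t)
      · refine hpres f ?_ w hw
        intro t; rw [← Fp_succ]; exact hS _
      · refine hpres h ?_ w hw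
        intro t; rw [hh]; exact Submodule.smul_mem _ _ (hS t)
    · intro hb
      have := hS 0
      rw [hb, Fp_zero] at this
      exact hv0 (by simpa using this)
  exact hSV.symm

namespace Irr
variable {e f h v : g} {V : Submodule ℂ g} {n : ℕ}

lemma mem (I : Irr e f h V n v) (t : ℕ) : Fp f t v ∈ V := by
  by_cases ht : n < t
  · rw [I.top t ht]; exact zero_mem _
  · rw [I.span]; exact Submodule.subset_span ⟨⟨t, by omega⟩, rfl⟩

lemma ne (I : Irr e f h V n v) {t : ℕ} (ht : t ≤ n) : Fp f t v ≠ 0 :=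
  I.li.ne_zero (⟨t, by omega⟩ : Fin (n+1))

lemma finrank (I : Irr e f h V n v) : Module.finrank ℂ V = n + 1 := by
  rw [I.span, finrank_span_eq_card I.li]; simp

lemma weight (I : Irr e f h V n v) {x : g} (hx : x ∈ V) {μ : ℂ} (hμ : ⁅h, x⁆ = μ • x) (hx0 : x ≠ 0) :
    ∃ t ≤ n, μ = n - 2 * t ∧ ∃ c : ℂ, x = c • Fp f t v := by
  rw [I.span, Submodule.mem_span_range_iff_exists_fun] at hx
  obtain ⟨c, rfl⟩ := hx
  have h1 : ∑ t : Fin (n+1), (c t * ((n : ℂ) - 2 * (t : ℕ) - μ)) • Fp f t v = 0 := by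
    have : ∀ t : Fin (n+1), (c t * ((n : ℂ) - 2 * (t : ℕ) - μ)) • Fp f t v =
        ⁅h, c t • Fp f t v⁆ - μ • (c t • Fp f t v) := by
      intro t
      rw [lie_smul, I.hh, smul_smul, smul_smul, ← sub_smul]; congr 1; ring
    simp only [this, Finset.sum_sub_distrib, ← lie_sum, ← Finset.smul_sum, hμ, sub_self]
  have h2 := Fintype.linearIndependent_iff.1 I.li _ h1
  have h3 : ∃ t, c t ≠ 0 := by
    by_contra hcon
    push Not at hcon
    exact hx0 (by simp [hcon])
  obtain ⟨t, ht⟩ := h3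
  have h4 : ∀ r, c r ≠ 0 → μ = n - 2 * (r : ℕ) := by
    intro r hr
    have := (mul_eq_zero.1 (h2 r)).resolve_left hr
    linear_combination -this
  refine ⟨t, by omega, h4 t ht, c t, ?_⟩
  rw [Finset.sum_eq_single t]
  · intro r _ hr
    have : c r = 0 := by
      by_contra hcr
      have e1 := h4 r hcr
      rw [h4 t ht] at e1
      have : ((t : ℕ) : ℂ) = (r : ℕ) := by linear_combination (-1/2 : ℂ) * e1
      exact hr (Fin.ext (by exact_mod_cast this.symm))
    rw [this, zero_smul]
  · simp

end Irr
end sl2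
end Symp

namespace Symp
section cg

/-- first row of the transition coefficients -/
def T0 (n p k : ℕ) : ℕ → ℚ
  | 0 => if k = 0 then 1 else 0
  | j+1 => if j + 1 < k then 0 else if j + 1 = k then 1 else
      T0 n p k j * (((j : ℚ) + 1) * (n - j)) / ((((j - k : ℕ) : ℚ) + 1) * (p - (j - k : ℕ)))

/-- transition coefficients -/
def TT (n p k : ℕ) : ℕ → ℕ → ℚ
  | 0, j => T0 n p k j
  | i+1, j => TT n p k i j - TT n p k i (j+1)

lemma T0_lt (n p k j : ℕ) (hj : j < k) : T0 n p k j = 0 := by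
  cases j with
  | zero => simp [T0]; omega
  | succ j => simp [T0, hj]

lemma TT_lt (n p k i j : ℕ) (hj : i + j < k) : TT n p k i j = 0 := by
  induction i generalizing j with
  | zero => exact T0_lt n p k j (by omega)
  | succ i ih => rw [TT, ih j (by omega), ih (j+1) (by omega), sub_zero]

variable {g : Type*} [LieRing g] [LieAlgebra ℂ g]
variable {e f h v w u : g} {V W U : Submodule ℂ g} {m n p : ℕ}

lemma Irr.lieSpan2_bot (Iv : Irr e f h V m v) (Iw : Irr e f h W n w)
    (hz : ∀ i j, ⁅Fp f i v, Fp f j w⁆ = 0) : lieSpan2 g V W = ⊥ := by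
  have h1 : ∀ i, ∀ y ∈ W, ⁅Fp f i v, y⁆ = 0 := by
    intro i y hy
    have : W ≤ LinearMap.ker (LieModule.toEnd ℂ g g (Fp f i v)) := by
      rw [Iw.span, Submodule.span_le]
      rintro _ ⟨t, rfl⟩
      exact hz i t
    exact this hy
  rw [lieSpan2_eq_bot]
  intro x hx y hy
  have : V ≤ LinearMap.ker (LieModule.toEnd ℂ g g y) := by
    rw [Iv.span, Submodule.span_le]
    rintro _ ⟨t, rfl⟩
    change ⁅y, Fp f t v⁆ = 0
    rw [← lie_skew, h1 t y hy, neg_zero]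
  have h2 : ⁅y, x⁆ = 0 := this hx
  rw [← lie_skew, h2, neg_zero]

lemma Irr.cg (Iv : Irr e f h V m v) (Iw : Irr e f h W n w) (Iu : Irr e f h U p u)
    (hb : ∀ x ∈ V, ∀ y ∈ W, ⁅x, y⁆ ∈ U) (hne : lieSpan2 g V W ≠ ⊥) :
    ∃ k : ℕ, ∃ l : ℂ, l ≠ 0 ∧ m + n = p + 2 * k ∧ k ≤ n ∧
      ∀ i j, ⁅Fp f i v, Fp f j w⁆ = (l * (TT n p k i j : ℚ)) • Fp f (i + j - k) u := by
  have hrec : ∀ i j, ⁅Fp f (i+1) v, Fp f j w⁆ =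
      ⁅f, ⁅Fp f i v, Fp f j w⁆⁆ - ⁅Fp f i v, Fp f (j+1) w⁆ := by
    intro i j
    rw [Fp_succ, Fp_succ, leibniz_lie f]; abel
  have hex : ∃ k, ⁅v, Fp f k w⁆ ≠ 0 := by
    by_contra hcon
    push Not at hcon
    apply hne
    apply Iv.lieSpan2_bot Iw
    intro i
    induction i with
    | zero => intro j; rw [Fp_zero]; exact hcon j
    | succ i ih => intro j; rw [hrec, ih, ih]; simp
  classical
  have hk := Nat.find_spec hex
  have hmin : ∀ j < Nat.find hex, ⁅v, Fp f j w⁆ = 0 := fun j hj => by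
    by_contra hcon; exact Nat.find_min hex hj hcon
  generalize Nat.find hex = k at hk hmin
  have hkn : k ≤ n := by
    by_contra hcon
    rw [Iw.top k (by omega)] at hk
    simp at hk
  have hvm : v ∈ V := by have := Iv.mem 0; rwa [Fp_zero] at this
  have hhv : ⁅h, v⁆ = (m : ℂ) • v := by have := Iv.hh 0; rw [Fp_zero] at this; simpa using this
  have hwt : ∀ j, ⁅h, ⁅v, Fp f j w⁆⁆ = ((m : ℂ) + n - 2 * j) • ⁅v, Fp f j w⁆ := by
    intro j
    rw [leibniz_lie, hhv, Iw.hh, smul_lie, lie_smul, ← add_smul]; congr 1; ring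
  have hel : ∀ j, ⁅e, ⁅v, Fp f (j+1) w⁆⁆ = (((j : ℂ) + 1) * (n - j)) • ⁅v, Fp f j w⁆ := by
    intro j
    rw [leibniz_lie, Iv.he0, zero_lie, zero_add, Iw.he, lie_smul]
  have hek : ⁅e, ⁅v, Fp f k w⁆⁆ = 0 := by
    cases k with
    | zero => rw [leibniz_lie, Iv.he0, Fp_zero, Iw.he0]; simp
    | succ k => rw [hel, hmin k (by omega), smul_zero]
  obtain ⟨t, htp, hwt', l, hl⟩ := Iu.weight (hb v hvm _ (Iw.mem k)) (hwt k) hk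
  have hl0 : l ≠ 0 := by rintro rfl; rw [zero_smul] at hl; exact hk hl
  have ht0 : t = 0 := by
    cases t with
    | zero => rfl
    | succ t =>
      exfalso
      rw [hl, lie_smul, Iu.he, smul_smul] at hek
      have h1 := (smul_eq_zero.1 hek).resolve_right (Iu.ne (by omega))
      have h2 : ((t : ℂ) + 1) ≠ 0 := Nat.cast_add_one_ne_zero t
      have h3 : ((p : ℂ) - t) ≠ 0 := by
        rw [sub_ne_zero]
        intro h; have : p = t := by exact_mod_cast h
        omega
      exact (mul_ne_zero hl0 (mul_ne_zero h2 h3)) h1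
  subst ht0
  have hsum : m + n = p + 2 * k := by
    have : ((m + n : ℕ) : ℂ) = ((p + 2 * k : ℕ) : ℂ) := by
      push_cast; push_cast at hwt'; linear_combination hwt'
    exact_mod_cast this
  have hsumC : (m : ℂ) + n = p + 2 * k := by exact_mod_cast hsum
  refine ⟨k, l, hl0, hsum, hkn, ?_⟩
  have hrow : ∀ r, ⁅v, Fp f (k + r) w⁆ = (l * (T0 n p k (k + r) : ℚ)) • Fp f r u := by
    intro r
    induction r with
    | zero =>
      rw [add_zero, hl]
      congr 1
      cases k <;> simp [T0]
    | succ r ih =>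
      by_cases hz : ⁅v, Fp f (k + (r + 1)) w⁆ = 0
      · rw [hz]
        by_cases hrp : r + 1 ≤ p
        · have h1 := hel (k + r)
          rw [add_assoc, hz, lie_zero, ih, smul_smul] at h1
          have h2 := (smul_eq_zero.1 h1.symm).resolve_right (Iu.ne (by omega))
          have h3 : T0 n p k (k + (r+1)) = 0 := by
            have h4 : ((k + r : ℕ) : ℂ) + 1 ≠ 0 := Nat.cast_add_one_ne_zero _
            have h5 : ((n : ℂ) - (k + r : ℕ)) * (T0 n p k (k+r) : ℚ) = 0 := by
              rcases mul_eq_zero.1 h2 with h6 | h6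
              · rw [(mul_eq_zero.1 h6).resolve_left h4, zero_mul]
              · rw [(mul_eq_zero.1 h6).resolve_left hl0, mul_zero]
            have h6 : ((n : ℚ) - (k + r : ℕ)) * (T0 n p k (k+r)) = 0 := by exact_mod_cast h5
            rw [← add_assoc, T0, if_neg (by omega), if_neg (by omega)]
            rw [show T0 n p k (k+r) * ((((k + r : ℕ) : ℚ) + 1) * (n - (k + r : ℕ))) =
              (((k + r : ℕ) : ℚ) + 1) * (((n : ℚ) - (k + r : ℕ)) * (T0 n p k (k+r))) by ring, h6]
            simp
          rw [h3]; simp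
        · rw [Iu.top _ (by omega), smul_zero]
      · obtain ⟨t, htp, hwt', c, hc⟩ := Iu.weight (hb v hvm _ (Iw.mem _)) (hwt _) hz
        have htr : t = r + 1 := by
          have : ((t : ℕ) : ℂ) = ((r + 1 : ℕ) : ℂ) := by
            push_cast; push_cast at hwt'; linear_combination (1/2 : ℂ) * hwt' - (1/2 : ℂ) * hsumC
          exact_mod_cast this
        subst htr
        rw [hc]
        congr 1
        have h1 := hel (k + r)
        rw [add_assoc, hc, lie_smul, Iu.he, ih, smul_smul, smul_smul] at h1
        have h2 := smul_left_injective ℂ (Iu.ne (t := r) (by omega)) h1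
        rw [← add_assoc, T0, if_neg (by omega), if_neg (by omega)]
        have e1 : k + r - k = r := by omega
        rw [e1]
        push_cast
        have h4 : (r : ℂ) + 1 ≠ 0 := Nat.cast_add_one_ne_zero _
        have h5 : ((p : ℂ) - r) ≠ 0 := by
          rw [sub_ne_zero]
          intro h; have : p = r := by exact_mod_cast h
          omega
        push_cast at h2
        field_simp
        linear_combination h2
  intro i
  induction i with
  | zero =>
    intro j
    rw [Fp_zero, TT, zero_add]
    rcases Nat.lt_or_ge j k with hj | hj
    · rw [hmin j hj, T0_lt _ _ _ _ hj]; simp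
    · obtain ⟨r, rfl⟩ := Nat.exists_eq_add_of_le hj
      rw [hrow r]; congr 2; omega
  | succ i ih =>
    intro j
    rw [hrec, ih, ih, lie_smul, ← Fp_succ, TT]
    rcases Nat.lt_or_ge (i + j) k with hj | hj
    · rw [TT_lt _ _ _ _ _ hj]
      rw [show i + (j + 1) - k = i + 1 + j - k by omega]
      push_cast
      simp
    · rw [show i + (j + 1) - k = i + 1 + j - k by omega, show i + j - k + 1 = i + 1 + j - k by omega,
        ← sub_smul]
      push_cast
      congr 1; ring

end cg
end Symp

namespace Symp
section num

def ok (m n p : ℕ) : Bool := decide (m ≤ n + p) && decide (n ≤ m + p) && decide (p ≤ m + n) &&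
  decide ((m + n + p) % 2 = 0)

def okalt (m p : ℕ) : Bool := ok m m p && decide (((m + m - p) / 2) % 2 = 1)

/-- defect of the symmetric Jacobi relation -/
def sdef (b c z k1 k2 i i' j : ℕ) : ℚ :=
  TT b c k1 i' j * TT c z k2 i (i' + j - k1) - TT b c k1 i j * TT c z k2 i' (i + j - k1)

def sbad (a b c z k1 k2 : ℕ) : Bool :=
  (List.range (a + 1)).any fun i => (List.range i).any fun i' =>
    decide (i + i' ≤ k1 + k2) && decide (sdef b c z k1 k2 i i' (k1 + k2 - i - i') ≠ 0)

/-- defect of the cyclic Jacobi relation -/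
def cdef (a c z k1 k2 i j l : ℕ) : ℚ :=
  TT a c k1 j l * TT c z k2 i (j + l - k1) + TT a c k1 l i * TT c z k2 j (l + i - k1) +
    TT a c k1 i j * TT c z k2 l (i + j - k1)

def cbad (a c z k1 k2 : ℕ) : Bool :=
  (List.range (a + 1)).any fun i => (List.range (a + 1)).any fun j =>
    decide (i + j ≤ k1 + k2) && decide (cdef a c z k1 k2 i j (k1 + k2 - i - j) ≠ 0)

def condS (a b c z : ℕ) : Bool :=
  decide (1 ≤ a) && decide (1 ≤ b) && decide (1 ≤ z) && (decide (a ≠ z) || decide (c = 0)) &&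
  ok a b c && ok a c z &&
  ((okalt a c && okalt b z) || (okalt a z && okalt b z) || (okalt a z && ok b c z))

def condX (a b c z : ℕ) : Bool :=
  decide (1 ≤ a) && decide (1 ≤ b) && decide (1 ≤ z) && (decide (a ≠ z) || decide (c = 0)) &&
  ok a b z && ok a c z && okalt a c && okalt b z

def chk (P : ℕ → ℕ → ℕ → ℕ → Bool) : Bool :=
  (List.range 19).all fun a => (List.range (19 - a)).all fun b => (List.range (19 - a - b)).all
    fun c => (List.range (19 - a - b - c)).all fun z => P a b c z

lemma chk_spec {P : ℕ → ℕ → ℕ → ℕ → Bool} (h : chk P = true) (a b c z : ℕ)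
    (hs : a + b + c + z ≤ 18) : P a b c z = true := by
  unfold chk at h
  simp only [List.all_eq_true, List.mem_range] at h
  exact h a (by omega) b (by omega) c (by omega) z (by omega)

lemma numS : chk (fun a b c z => !condS a b c z ||
    sbad a b c z ((a + b - c) / 2) ((a + c - z) / 2)) = true := by
  decide +kernel

lemma numX : chk (fun a b c z => !condX a b c z ||
    cbad a c z ((a + a - c) / 2) ((a + c - z) / 2) ||
    decide (a = 6 ∧ b = 4 ∧ c = 6 ∧ z = 2)) = true := by
  decide +kernel

end num
end Symp

namespace Symp
section asm
variable {g : Type*} [LieRing g] [LieAlgebra ℂ g]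
variable {s : LieSubalgebra ℂ g} {V : Fin 4 → Submodule ℂ g}

lemma Setup.exists_proj (h : Setup s V) : ∃ P : Fin 4 → g →ₗ[ℂ] g, (∀ i x, P i x ∈ V i) ∧
    (∀ i, ∀ x ∈ V i, P i x = x) ∧ (∀ i j, i ≠ j → ∀ x ∈ V j, P i x = 0) ∧
    (∀ x ∈ LieAlgebra.radical ℂ g, x = ∑ i, P i x) ∧
    (∀ i, ∀ y ∈ s, ∀ x, P i ⁅y, x⁆ = ⁅y, P i x⁆) := by
  have hex : ∀ i, ∃ D : g →ₗ[ℂ] g, (∀ x ∈ s, D x = 0) ∧ (∀ j, ∀ x ∈ V j, D x = if i = j then x else 0) := by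
    intro i
    obtain ⟨D, hD⟩ := h.exists_lin (fun j => match j with
      | none => 0
      | some j => if i = j then (V j).subtype else 0)
    refine ⟨D, fun x hx => hD none ⟨x, hx⟩, fun j x hx => ?_⟩
    have := hD (some j) ⟨x, hx⟩
    simp only at this
    rw [this]
    by_cases hij : i = j
    · simp only [hij, if_true]; rfl
    · simp only [hij, if_false]; rfl
  choose P hPs hPV using hex
  refine ⟨P, ?_, ?_, ?_, ?_, ?_⟩
  · intro i x
    refine h.ind_all (fun x => P i x ∈ V i) ?_ (by simp) ?_ x
    · intro j x hx
      cases j with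
      | none => rw [hPs i x hx]; exact zero_mem _
      | some j =>
        rw [hPV i j x hx]
        split_ifs with hij
        · rw [hij]; exact hx
        · exact zero_mem _
    · intro a b ha hb; rw [map_add]; exact add_mem ha hb
  · intro i x hx; rw [hPV i i x hx, if_pos rfl]
  · intro i j hij x hx; rw [hPV i j x hx, if_neg hij]
  · intro x hx
    have hx' : x ∈ ⨆ i, V i := by rw [h.dec.2.2]; exact hx
    refine Submodule.iSup_induction V (motive := fun x => x = ∑ i, P i x) hx' ?_ (by simp) ?_
    · intro j x hx
      simp [hPV _ j x hx]
    · intro a b ha hb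
      simp only [map_add, Finset.sum_add_distrib]
      rw [← ha, ← hb]
  · intro i y hy x
    refine h.ind_all (fun x => P i ⁅y, x⁆ = ⁅y, P i x⁆) ?_ (by simp) ?_ x
    · intro j x hx
      cases j with
      | none => rw [hPs i x hx, hPs i _ (s.lie_mem hy hx), lie_zero]
      | some j =>
        rw [hPV i j x hx, hPV i j _ (h.inv hy hx)]
        split_ifs <;> simp
    · intro a b ha hb; rw [lie_add, map_add, map_add, lie_add, ha, hb]

lemma Setup.fixed (h : Setup s V) {i : Fin 4} (hnt : ∃ x ∈ s, ∃ v ∈ V i, ⁅x, v⁆ ≠ 0) {v : g}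
    (hv : v ∈ V i) (hf : ∀ x ∈ s, ⁅x, v⁆ = 0) : v = 0 := by
  let W : Submodule ℂ g :=
    { carrier := {v | v ∈ V i ∧ ∀ x ∈ s, ⁅x, v⁆ = 0}
      add_mem' := fun ha hb => ⟨add_mem ha.1 hb.1, fun x hx => by
        rw [lie_add, ha.2 x hx, hb.2 x hx, add_zero]⟩
      zero_mem' := ⟨zero_mem _, fun x _ => lie_zero x⟩
      smul_mem' := fun c a ha => ⟨Submodule.smul_mem _ _ ha.1, fun x hx => by
        rw [lie_smul, ha.2 x hx, smul_zero]⟩ }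
  have hW : v ∈ W := ⟨hv, hf⟩
  rcases (h.dec.1 i).2.2 W (fun x hx => hx.1) (by
    intro x hx w hw
    rw [hw.2 x hx]; exact zero_mem _) with h1 | h1
  · rw [h1] at hW; simpa using hW
  · obtain ⟨x, hx, v, hv, hne⟩ := hnt
    rw [← h1] at hv
    exact (hne (hv.2 x hx)).elim

lemma Setup.ann (h : Setup s V) {i j : Fin 4} (hne : lieSpan2 g (V i) (V j) ≠ ⊥) {v : g}
    (hv : v ∈ V i) (hf : ∀ y ∈ V j, ⁅v, y⁆ = 0) : v = 0 := by
  let W : Submodule ℂ g :=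
    { carrier := {v | v ∈ V i ∧ ∀ y ∈ V j, ⁅v, y⁆ = 0}
      add_mem' := fun ha hb => ⟨add_mem ha.1 hb.1, fun x hx => by
        rw [add_lie, ha.2 x hx, hb.2 x hx, add_zero]⟩
      zero_mem' := ⟨zero_mem _, fun x _ => zero_lie x⟩
      smul_mem' := fun c a ha => ⟨Submodule.smul_mem _ _ ha.1, fun x hx => by
        rw [smul_lie, ha.2 x hx, smul_zero]⟩ }
  have hW : v ∈ W := ⟨hv, hf⟩
  rcases (h.dec.1 i).2.2 W (fun x hx => hx.1) (by
    intro x hx w hw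
    refine ⟨h.inv hx hw.1, fun y hy => ?_⟩
    rw [lie_lie, hw.2 y hy, hw.2 _ (h.inv hx hy)]; simp) with h1 | h1
  · rw [h1] at hW; simpa using hW
  · exfalso
    apply hne
    rw [lieSpan2_eq_bot]
    intro x hx y hy
    rw [← h1] at hx
    exact hx.2 y hy

lemma Data.ne (D : Data s V) (i : Fin 4) : V i ≠ ⊥ := (D.dec.1 i).1

lemma Data.centerRad_eq (D : Data s V)
    (b00 : lieSpan2 g (V 0) (V 0) = V 2) (b01 : lieSpan2 g (V 0) (V 1) = V 3)
    (b11 : lieSpan2 g (V 1) (V 1) = V 3) (b12 : lieSpan2 g (V 1) (V 2) = ⊥) :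
    centerRad g = V 3 := by
  obtain ⟨P, hP1, hP2, hP3, hP4, -⟩ := D.toSetup.exists_proj
  apply le_antisymm
  · rintro x ⟨hx, hxc⟩
    have hsum := hP4 x hx
    rw [Fin.sum_univ_four] at hsum
    have m0 := hP1 0 x
    have m1 := hP1 1 x
    have m2 := hP1 2 x
    have m3 := hP1 3 x
    generalize P 0 x = x0 at hsum m0
    generalize P 1 x = x1 at hsum m1
    generalize P 2 x = x2 at hsum m2
    generalize P 3 x = x3 at hsum m3
    have z3 : ∀ i, ∀ y ∈ V i, ⁅x3, y⁆ = 0 := by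
      intro i y hy
      rw [← lie_skew, lieSpan2_eq_bot.1 (D.bi3 i) y hy x3 m3, neg_zero]
    have hy : ∀ i, ∀ y ∈ V i, ⁅x0, y⁆ + ⁅x1, y⁆ + ⁅x2, y⁆ = 0 := by
      intro i y hy
      have := hxc y (D.le_rad i hy)
      rwa [hsum, add_lie, add_lie, add_lie, z3 i y hy, add_zero] at this
    have e0 : x0 = 0 := by
      refine D.ann (j := 0) (by rw [b00]; exact D.ne 2) m0 fun y hy0 => ?_
      have h1 := congrArg (P 2) (hy 0 y hy0)
      have h2 : ⁅x0, y⁆ ∈ V 2 := by rw [← b00]; exact lie_mem_lieSpan2 m0 hy0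
      have h3 : ⁅x1, y⁆ ∈ V 3 := by rw [← b01, lieSpan2_comm]; exact lie_mem_lieSpan2 m1 hy0
      have h4 : ⁅x2, y⁆ ∈ V 3 := by rw [← D.b02, lieSpan2_comm]; exact lie_mem_lieSpan2 m2 hy0
      rw [map_add, map_add, hP2 2 _ h2, hP3 2 3 (by decide) _ h3, hP3 2 3 (by decide) _ h4] at h1
      simpa using h1
    have e1 : x1 = 0 := by
      refine D.ann (j := 1) (by rw [b11]; exact D.ne 3) m1 fun y hy0 => ?_
      have h1 := hy 1 y hy0
      rw [e0, ← lie_skew x2 y, lieSpan2_eq_bot.1 b12 y hy0 x2 m2] at h1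
      simpa using h1
    have e2 : x2 = 0 := by
      refine D.ann (j := 0) (by rw [lieSpan2_comm, D.b02]; exact D.ne 3) m2 fun y hy0 => ?_
      have h1 := hy 0 y hy0
      rw [e0, e1] at h1
      simpa using h1
    rw [hsum, e0, e1, e2]
    simpa using m3
  · intro x hx
    refine ⟨D.le_rad 3 hx, fun y hy => ?_⟩
    have hx' : y ∈ ⨆ i, V i := by rw [D.dec.2.2]; exact hy
    refine Submodule.iSup_induction V (motive := fun y => ⁅x, y⁆ = 0) hx' ?_ (by simp) ?_
    · intro i y hy
      rw [← lie_skew, lieSpan2_eq_bot.1 (D.bi3 i) y hy x hx, neg_zero]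
    · intro a b ha hb; rw [lie_add, ha, hb, add_zero]

lemma Data.centralizer_zero (D : Data s V) (h2 : ∃ x ∈ s, ∃ v ∈ V 2, ⁅x, v⁆ ≠ 0) {x : g}
    (hx : ∀ y ∈ s, ⁅x, y⁆ = 0) : x = 0 := by
  obtain ⟨P, hP1, hP2, hP3, hP4, hP5⟩ := D.toSetup.exists_proj
  have hnt : ∀ i, ∃ x ∈ s, ∃ v ∈ V i, ⁅x, v⁆ ≠ 0 := by
    intro i
    fin_cases i
    · exact D.nt0
    · exact D.nt1
    · exact h2
    · exact D.nt3
  rw [hP4 x (D.toSetup.centralizer hx)]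
  refine Finset.sum_eq_zero fun i _ => ?_
  refine D.fixed (hnt i) (hP1 i x) fun y hy => ?_
  rw [← hP5 i y hy, ← lie_skew, hx y hy]; simp

variable {e f h : g}

lemma Irr.pos {W : Submodule ℂ g} {n : ℕ} {v : g} (I : Irr e f h W n v)
    (hspan : s.toSubmodule = Submodule.span ℂ {e, f, h}) (hnt : ∃ x ∈ s, ∃ v ∈ W, ⁅x, v⁆ ≠ 0) :
    1 ≤ n := by
  by_contra hn
  have hn : n = 0 := by omega
  subst hn
  obtain ⟨x, hx, w, hw, hne⟩ := hnt
  apply hne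
  rw [I.span] at hw
  have hx' : x ∈ Submodule.span ℂ {e, f, h} := by rw [← hspan]; exact hx
  rw [Submodule.mem_span_triple] at hx'
  obtain ⟨a, b, c, rfl⟩ := hx'
  rw [Submodule.mem_span_range_iff_exists_fun] at hw
  obtain ⟨d, rfl⟩ := hw
  have h1 := I.hh 0
  have h2 := I.he0
  have h3 := I.top 1 (by omega)
  rw [Fp_succ] at h3
  simp only [Fp_zero] at h1 h3
  simp [add_lie, Fp_zero, h1, h2, h3]

lemma Irr.nontriv {W : Submodule ℂ g} {n : ℕ} {v : g} (I : Irr e f h W n v)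
    (hhs : h ∈ s) (hn : n ≠ 0) : ∃ x ∈ s, ∃ v ∈ W, ⁅x, v⁆ ≠ 0 := by
  refine ⟨h, hhs, Fp f 0 v, I.mem 0, ?_⟩
  rw [I.hh]
  refine smul_ne_zero ?_ (I.ne (by omega))
  simpa using hn

lemma Data.a_ne_z (D : Data s V) (hspan : s.toSubmodule = Submodule.span ℂ {e, f, h})
    {a c : ℕ} {va vc vz : g} (Ia : Irr e f h (V 0) a va) (Iz : Irr e f h (V 3) a vz)
    (Ic : Irr e f h (V 2) c vc) : c = 0 := by
  by_contra hc
  have hhs : h ∈ s := by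
    change h ∈ s.toSubmodule; rw [hspan]; exact Submodule.subset_span (by simp)
  have h2 := Ic.nontriv hhs hc
  obtain ⟨Ψ, hΨ⟩ : ∃ Ψ : g →ₗ[ℂ] g, ∀ t : Fin (a+1), Ψ (Fp f t va) = Fp f t vz := by
    obtain ⟨Ψ, hΨ⟩ := LinearMap.exists_extend ((Module.Basis.span Ia.li).constr ℂ
      (fun t : Fin (a+1) => Fp f t vz))
    refine ⟨Ψ, fun t => ?_⟩
    have h1 := (Module.Basis.span Ia.li).constr_basis ℂ (fun t : Fin (a+1) => Fp f t vz) t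
    rw [← hΨ] at h1
    have h2 : ((Module.Basis.span Ia.li t : _) : g) = Fp f t va :=
      congrArg Subtype.val (Module.Basis.span_apply Ia.li t)
    rw [← h2]
    exact h1
  have hΨ' : ∀ t : ℕ, Ψ (Fp f t va) = Fp f t vz := by
    intro t
    by_cases ht : a < t
    · rw [Ia.top t ht, Iz.top t ht, map_zero]
    · exact hΨ ⟨t, by omega⟩
  have hmem : ∀ w ∈ V 0, Ψ w ∈ V 3 := by
    have : V 0 ≤ (V 3).comap Ψ := by
      conv_lhs => rw [Ia.span]
      rw [Submodule.span_le]
      rintro _ ⟨t, rfl⟩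
      change Ψ _ ∈ V 3
      rw [hΨ]; exact Iz.mem t
    exact this
  have hpres : ∀ x : g, (∀ t, Ψ ⁅x, Fp f t va⁆ = ⁅x, Fp f t vz⁆) → ∀ w ∈ V 0, Ψ ⁅x, w⁆ = ⁅x, Ψ w⁆ := by
    intro x hx w hw
    rw [Ia.span, Submodule.mem_span_range_iff_exists_fun] at hw
    obtain ⟨d, rfl⟩ := hw
    simp only [lie_sum, map_sum, lie_smul, map_smul, hx, hΨ]
  have heq : ∀ x ∈ s, ∀ w ∈ V 0, Ψ ⁅x, w⁆ = ⁅x, Ψ w⁆ := by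
    intro x hx w hw
    have hx' : x ∈ Submodule.span ℂ {e, f, h} := by rw [← hspan]; exact hx
    rw [Submodule.mem_span_triple] at hx'
    obtain ⟨p, q, r, rfl⟩ := hx'
    simp only [add_lie, smul_lie, map_add, map_smul]
    rw [hpres e ?_ w hw, hpres f ?_ w hw, hpres h ?_ w hw]
    · intro t; rw [Ia.hh, Iz.hh, map_smul, hΨ']
    · intro t; rw [← Fp_succ, ← Fp_succ, hΨ']
    · intro t
      cases t with
      | zero => rw [Fp_zero, Fp_zero, Ia.he0, Iz.he0, map_zero]
      | succ t => rw [Ia.he, Iz.he, map_smul, hΨ']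
  obtain ⟨x, hx, hxφ⟩ := D.der (Ψ.domRestrict (V 0)) (fun a => hmem a a.2) (by
    intro x hx a b hab
    change Ψ b = ⁅x, Ψ a⁆
    rw [hab, heq x hx a a.2])
  rw [D.centralizer_zero h2 hx] at hxφ
  have h1 : Ψ (Fp f 0 va) = ⁅(0 : g), Fp f 0 va⁆ := hxφ ⟨Fp f 0 va, Ia.mem 0⟩
  rw [hΨ', zero_lie] at h1
  exact Iz.ne (by omega) h1

lemma Irr.cg_ok {A B C : Submodule ℂ g} {m n p : ℕ} {v w u : g} (Iv : Irr e f h A m v)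
    (Iw : Irr e f h B n w) (Iu : Irr e f h C p u) (hb : lieSpan2 g A B = C) :
    ok m n p = true ∧ ∃ l : ℂ, l ≠ 0 ∧ ∀ i j, ⁅Fp f i v, Fp f j w⁆ =
      (l * (TT n p ((m + n - p) / 2) i j : ℚ)) • Fp f (i + j - (m + n - p) / 2) u := by
  have hC : C ≠ ⊥ := by
    intro hC
    have := Iu.mem 0
    rw [hC] at this
    exact Iu.ne (t := 0) (by omega) (by simpa using this)
  obtain ⟨k, l, hl, hk, hkn, hf⟩ := Iv.cg Iw Iu (fun x hx y hy => by
    rw [← hb]; exact lie_mem_lieSpan2 hx hy) (by rw [hb]; exact hC)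
  obtain ⟨k', -, -, hk', hkm, -⟩ := Iw.cg Iv Iu (fun x hx y hy => by
    rw [← hb, lieSpan2_comm]; exact lie_mem_lieSpan2 hx hy) (by rw [lieSpan2_comm, hb]; exact hC)
  have e1 : (m + n - p) / 2 = k := by omega
  refine ⟨?_, l, hl, by rw [e1]; exact hf⟩
  simp only [ok, Bool.and_eq_true, decide_eq_true_eq]
  omega

lemma TT_diag (n p k i : ℕ) (hi : i ≤ k) : TT n p k i (k - i) = (-1) ^ i := by
  induction i with
  | zero => cases k <;> simp [TT, T0]
  | succ i ih =>
    rw [TT, TT_lt _ _ _ _ _ (by omega), show k - (i + 1) + 1 = k - i by omega, ih (by omega),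
      pow_succ]
    ring

lemma Irr.cg_okalt {A C : Submodule ℂ g} {m p : ℕ} {v u : g} (Iv : Irr e f h A m v)
    (Iu : Irr e f h C p u) (hb : lieSpan2 g A A = C) : okalt m p = true := by
  obtain ⟨h1, l, hl, hf⟩ := Iv.cg_ok Iv Iu hb
  simp only [okalt, h1, Bool.true_and, decide_eq_true_eq]
  generalize (m + m - p) / 2 = k at hf
  have h2 := hf 0 k
  have h3 := hf k 0
  rw [← lie_skew, h2] at h3
  have t1 := TT_diag m p k 0 (by omega)
  have t2 := TT_diag m p k k le_rfl
  rw [Nat.sub_self] at t2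
  rw [Nat.sub_zero] at t1
  rw [t1, t2, add_zero, zero_add, Nat.sub_self, ← neg_smul] at h3
  have h4 := smul_left_injective ℂ (Iu.ne (t := 0) (by omega)) h3
  by_contra hodd
  have : Even k := by rw [Nat.even_iff]; omega
  rw [this.neg_one_pow] at h4
  have h5 : (2 : ℂ) * l = 0 := by push_cast at h4; linear_combination -h4
  simp [hl] at h5

end asm
end Symp

namespace Symp
section sl2
variable {g : Type*} [LieRing g] [LieAlgebra ℂ g]
variable {s : LieSubalgebra ℂ g} {V : Fin 4 → Submodule ℂ g}
variable {f : g}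

lemma dbl {b c z k1 k2 : ℕ} {va vb vc vz : g} {l1 l2 : ℂ}
    (hf1 : ∀ i j, ⁅Fp f i va, Fp f j vb⁆ = (l1 * (TT b c k1 i j : ℚ)) • Fp f (i + j - k1) vc)
    (hf2 : ∀ i j, ⁅Fp f i va, Fp f j vc⁆ = (l2 * (TT c z k2 i j : ℚ)) • Fp f (i + j - k2) vz)
    {i i' j : ℕ} (hij : i + i' + j = k1 + k2) :
    ⁅Fp f i va, ⁅Fp f i' va, Fp f j vb⁆⁆ =
      (l1 * l2 * ((TT b c k1 i' j * TT c z k2 i (i' + j - k1) : ℚ) : ℂ)) • Fp f 0 vz := by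
  rw [hf1, lie_smul, hf2, smul_smul]
  by_cases hk : i' + j < k1
  · rw [TT_lt _ _ _ _ _ hk]; simp
  · rw [show i + (i' + j - k1) - k2 = 0 by omega]
    congr 1
    push_cast
    ring

lemma dbl_S {a b c z k1 k2 : ℕ} {va vb vc vz : g} {l1 l2 : ℂ} (hl1 : l1 ≠ 0) (hl2 : l2 ≠ 0)
    (hz : Fp f 0 vz ≠ 0)
    (hf1 : ∀ i j, ⁅Fp f i va, Fp f j vb⁆ = (l1 * (TT b c k1 i j : ℚ)) • Fp f (i + j - k1) vc)
    (hf2 : ∀ i j, ⁅Fp f i va, Fp f j vc⁆ = (l2 * (TT c z k2 i j : ℚ)) • Fp f (i + j - k2) vz)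
    (hJ : ∀ i i' j, ⁅⁅Fp f i va, Fp f i' va⁆, Fp f j vb⁆ = 0) : sbad a b c z k1 k2 = false := by
  by_contra hb
  rw [Bool.not_eq_false] at hb
  simp only [sbad, List.any_eq_true, List.mem_range, Bool.and_eq_true, decide_eq_true_eq] at hb
  obtain ⟨i, -, i', -, hle, hne⟩ := hb
  apply hne
  have h1 := dbl hf1 hf2 (i := i) (i' := i') (j := k1 + k2 - i - i') (by omega)
  have h2 := dbl hf1 hf2 (i := i') (i' := i) (j := k1 + k2 - i - i') (by omega)
  have h3 := leibniz_lie (Fp f i va) (Fp f i' va) (Fp f (k1 + k2 - i - i') vb)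
  rw [hJ, zero_add, h1, h2] at h3
  have h4 := smul_left_injective ℂ hz h3
  have h5 := mul_left_cancel₀ (mul_ne_zero hl1 hl2) h4
  have h6 := Rat.cast_injective h5
  rw [sdef, h6, sub_self]

lemma dbl_X {a c z k1 k2 : ℕ} {va vc vz : g} {l1 l2 : ℂ} (hl1 : l1 ≠ 0) (hl2 : l2 ≠ 0)
    (hz : Fp f 0 vz ≠ 0)
    (hf1 : ∀ i j, ⁅Fp f i va, Fp f j va⁆ = (l1 * (TT a c k1 i j : ℚ)) • Fp f (i + j - k1) vc)
    (hf2 : ∀ i j, ⁅Fp f i va, Fp f j vc⁆ = (l2 * (TT c z k2 i j : ℚ)) • Fp f (i + j - k2) vz) :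
    cbad a c z k1 k2 = false := by
  by_contra hb
  rw [Bool.not_eq_false] at hb
  simp only [cbad, List.any_eq_true, List.mem_range, Bool.and_eq_true, decide_eq_true_eq] at hb
  obtain ⟨i, -, j, -, hle, hne⟩ := hb
  apply hne
  have h1 := dbl hf1 hf2 (i := i) (i' := j) (j := k1 + k2 - i - j) (by omega)
  have h2 := dbl hf1 hf2 (i := j) (i' := k1 + k2 - i - j) (j := i) (by omega)
  have h3 := dbl hf1 hf2 (i := k1 + k2 - i - j) (i' := i) (j := j) (by omega)
  have h4 := lie_jacobi (Fp f i va) (Fp f j va) (Fp f (k1 + k2 - i - j) va)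
  rw [h1, h2, h3, ← add_smul, ← add_smul, smul_eq_zero, or_iff_left hz, ← mul_add, ← mul_add,
    mul_eq_zero, or_iff_right (mul_ne_zero hl1 hl2)] at h4
  rw [cdef]
  exact_mod_cast h4

variable {e h : g}

lemma Data.sl2 [FiniteDimensional ℂ g] (D : Data s V) (t : IsSl2Triple h e f)
    (hspan : s.toSubmodule = Submodule.span ℂ {e, f, h}) :
    22 ≤ ∑ i, Module.finrank ℂ (V i) ∧ (∑ i, Module.finrank ℂ (V i) = 22 →
      Module.finrank ℂ (V 0) = 7 ∧ Module.finrank ℂ (V 1) = 5 ∧ Module.finrank ℂ (V 2) = 7 ∧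
      Module.finrank ℂ (V 3) = 3 ∧ centerRad g = V 3) := by
  obtain ⟨a, va, Ia⟩ := exists_irr t hspan (D.dec.1 0)
  obtain ⟨b, vb, Ib⟩ := exists_irr t hspan (D.dec.1 1)
  obtain ⟨c, vc, Ic⟩ := exists_irr t hspan (D.dec.1 2)
  obtain ⟨z, vz, Iz⟩ := exists_irr t hspan (D.dec.1 3)
  have ha := Ia.pos hspan D.nt0
  have hb := Ib.pos hspan D.nt1
  have hz := Iz.pos hspan D.nt3
  have haz : a ≠ z ∨ c = 0 := by
    by_cases h : a = z
    · subst h; exact Or.inr (D.a_ne_z hspan Ia Iz Ic)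
    · exact Or.inl h
  rw [Fin.sum_univ_four, Ia.finrank, Ib.finrank, Ic.finrank, Iz.finrank]
  by_cases hs : a + b + c + z ≤ 18
  swap
  · constructor <;> intros <;> omega
  have hz0 : Fp f 0 vz ≠ 0 := Iz.ne (by omega)
  obtain ⟨ok2, l2, hl2, hf2⟩ := Ia.cg_ok Ic Iz D.b02
  have key : ¬ (condX a b c z = true ∧ cbad a c z ((a + a - c) / 2) ((a + c - z) / 2) = false) ∨
      (a = 6 ∧ b = 4 ∧ c = 6 ∧ z = 2) := by
    have := chk_spec numX a b c z hs
    simp only [Bool.or_eq_true, Bool.not_eq_true', decide_eq_true_eq] at this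
    grind
  have keyS : ¬ (condS a b c z = true ∧ sbad a b c z ((a + b - c) / 2) ((a + c - z) / 2) = false) := by
    have := chk_spec numS a b c z hs
    simp only [Bool.or_eq_true, Bool.not_eq_true'] at this
    grind
  have S : ∀ (h01 : lieSpan2 g (V 0) (V 1) = V 2) (q : Fin 4) (h00 : lieSpan2 g (V 0) (V 0) = V q)
      (hq : lieSpan2 g (V q) (V 1) = ⊥),
      (okalt a c = true ∧ okalt b z = true ∨ okalt a z = true ∧ okalt b z = true ∨
        okalt a z = true ∧ ok b c z = true) → False := by
    intro h01 q h00 hq hor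
    obtain ⟨ok1, l1, hl1, hf1⟩ := Ia.cg_ok Ib Ic h01
    refine keyS ⟨?_, dbl_S hl1 hl2 hz0 hf1 hf2 ?_⟩
    · simp only [condS, Bool.and_eq_true, Bool.or_eq_true, decide_eq_true_eq]
      exact ⟨⟨⟨⟨⟨⟨ha, hb⟩, hz⟩, haz⟩, ok1⟩, ok2⟩, or_assoc.2 hor⟩
    · intro i i' j
      exact lieSpan2_eq_bot.1 hq _ (by rw [← h00]; exact lie_mem_lieSpan2 (Ia.mem _) (Ia.mem _))
        _ (Ib.mem _)
  rcases D.pat with ⟨h00, h01, h11, h12⟩ | ⟨h00, h01, h11, h12⟩ | ⟨h00, h01, h11, h12⟩ |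
    ⟨h00, h01, h12⟩
  · exact (S h01 2 h00 (by rw [lieSpan2_comm]; exact h12)
      (Or.inl ⟨Ia.cg_okalt Ic h00, Ib.cg_okalt Iz h11⟩)).elim
  · obtain ⟨ok1, l1, hl1, hf1⟩ := Ia.cg_ok Ia Ic h00
    rcases key with key | ⟨rfl, rfl, rfl, rfl⟩
    · refine (key ⟨?_, dbl_X hl1 hl2 hz0 hf1 hf2⟩).elim
      have := (Ia.cg_ok Ib Iz h01).1
      have h3 := Ia.cg_okalt Ic h00
      have h4 := Ib.cg_okalt Iz h11
      simp only [condX, Bool.and_eq_true, Bool.or_eq_true, decide_eq_true_eq]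
      exact ⟨⟨⟨⟨⟨⟨⟨ha, hb⟩, hz⟩, haz⟩, this⟩, ok2⟩, h3⟩, h4⟩
    · exact ⟨by omega, fun _ => ⟨rfl, rfl, rfl, rfl, D.centerRad_eq h00 h01 h11 h12⟩⟩
  · exact (S h01 3 h00 (by rw [lieSpan2_comm]; exact D.bi3 1)
      (Or.inr (Or.inl ⟨Ia.cg_okalt Iz h00, Ib.cg_okalt Iz h11⟩))).elim
  · exact (S h01 3 h00 (by rw [lieSpan2_comm]; exact D.bi3 1)
      (Or.inr (Or.inr ⟨Ia.cg_okalt Iz h00, (Ib.cg_ok Ic Iz h12).1⟩))).elim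

end sl2
end Symp

namespace Symp
section roots
open LieAlgebra LieModule LieAlgebra.IsKilling Module
variable {L : Type*} [LieRing L] [LieAlgebra ℂ L] [FiniteDimensional ℂ L] [LieAlgebra.IsSimple ℂ L]
variable {H : LieSubalgebra ℂ L} [H.IsCartanSubalgebra]

lemma root_line {γ : Weight ℂ H L} (hγ : γ.IsNonZero) {x y : L} (hx : x ∈ rootSpace H γ)
    (hy : y ∈ rootSpace H γ) (h0 : x ≠ 0) : ∃ c : ℂ, c • x = y := by
  obtain ⟨c, hc⟩ := (finrank_eq_one_iff_of_nonzero' (⟨x, hx⟩ : rootSpace H γ)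
    (by simpa using h0)).mp (finrank_rootSpace_eq_one γ hγ) ⟨y, hy⟩
  exact ⟨c, congrArg Subtype.val hc⟩

lemma gen_top (K : LieSubalgebra ℂ L)
    (hK : ∀ γ : Weight ℂ H L, γ.IsNonZero → ∀ x ∈ rootSpace H γ, x ∈ K) : K = ⊤ := by
  have hH : ∀ x ∈ H, x ∈ K := by
    have h1 : (⊤ : LieIdeal ℂ H).toSubmodule ≤ K.toSubmodule.comap H.toSubmodule.subtype := by
      rw [← biSup_corootSpace_eq_top H]
      simp only [LieSubmodule.iSup_toSubmodule, iSup_le_iff]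
      intro α hα x hx
      have hx' : x ∈ corootSpace α := hx
      rw [mem_corootSpace] at hx'
      rw [Submodule.mem_comap]
      refine Submodule.span_le.2 ?_ hx'
      rintro _ ⟨y, hy, z, hz, rfl⟩
      refine K.lie_mem (hK α hα y hy) (hK (-α) ?_ z ?_)
      · simpa using hα
      · simpa using hz
    intro x hx
    exact h1 (x := ⟨x, hx⟩) trivial
  rw [eq_top_iff]
  intro x _
  have h2 : (⊤ : LieSubmodule ℂ H L).toSubmodule ≤ K.toSubmodule := by
    rw [← iSup_genWeightSpace_eq_top' ℂ H L]
    simp only [LieSubmodule.iSup_toSubmodule, iSup_le_iff]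
    intro γ y hy
    by_cases hγ : γ.IsZero
    · have hy' : y ∈ rootSpace H γ := hy
      rw [hγ.eq, rootSpace_zero_eq] at hy'
      exact hH y (by simpa using hy')
    · exact hK γ hγ y hy
  exact h2 (x := x) trivial

lemma card_le (S : Finset (Weight ℂ H L)) (hS : ∀ γ ∈ S, γ.IsNonZero) :
    finrank ℂ H + S.card ≤ finrank ℂ L := by
  choose w hw hw0 using fun γ : Weight ℂ H L => γ.exists_ne_zero
  have hind := LieSubmodule.iSupIndep_toSubmodule.2 (iSupIndep_genWeightSpace ℂ H L)
  have hli : LinearIndependent ℂ (fun γ : S => w γ) := by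
    refine iSupIndep.linearIndependent (fun γ : S => (genWeightSpace L (γ : Weight ℂ H L)).toSubmodule)
      ?_ (fun γ => hw γ) (fun γ => hw0 γ)
    exact hind.comp (f := fun γ : S => ((γ : Weight ℂ H L) : H → ℂ))
      (fun a b hab => Subtype.ext (DFunLike.coe_injective hab))
  have hfin := finrank_span_eq_card hli
  rw [Fintype.card_coe] at hfin
  have hdisj : Disjoint H.toSubmodule (Submodule.span ℂ (Set.range fun γ : S => w γ)) := by
    have h0 := hind 0
    refine Disjoint.mono ?_ ?_ h0
    · intro x hx
      change x ∈ rootSpace H 0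
      rw [rootSpace_zero_eq]; simpa using hx
    · rw [Submodule.span_le]
      rintro _ ⟨γ, rfl⟩
      exact Submodule.mem_iSup_of_mem (γ : H → ℂ) (Submodule.mem_iSup_of_mem
        (fun h => hS γ γ.2 h) (hw γ))
  rw [← hfin]
  exact Submodule.finrank_add_finrank_le_of_disjoint hdisj

lemma case_one {α : Weight ℂ H L} (hα : α.IsNonZero)
    (hall : ∀ β : Weight ℂ H L, β.IsNonZero → β = α ∨ β = -α) :
    ∃ h e f : L, IsSl2Triple h e f ∧ ∀ x : L, x ∈ Submodule.span ℂ {e, f, h} := by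
  obtain ⟨h, e, f, t, he, hf⟩ := exists_isSl2Triple_of_weight_isNonZero hα
  refine ⟨h, e, f, t, ?_⟩
  have := gen_top (H := H) (t.toLieSubalgebra (R := ℂ)) (by
    intro γ hγ x hx
    rw [IsSl2Triple.mem_toLieSubalgebra_iff]
    rcases hall γ hγ with rfl | rfl
    · obtain ⟨c, rfl⟩ := root_line hγ he hx t.e_ne_zero
      exact ⟨c, 0, 0, by simp⟩
    · obtain ⟨c, rfl⟩ := root_line hγ (by simpa using hf) hx t.f_ne_zero
      exact ⟨0, c, 0, by simp⟩)
  intro x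
  have hx : x ∈ t.toLieSubalgebra (R := ℂ) := by rw [this]; trivial
  rw [IsSl2Triple.mem_toLieSubalgebra_iff] at hx
  obtain ⟨a, b, c, rfl⟩ := hx
  rw [Submodule.mem_span_triple]
  exact ⟨a, b, c, by rw [t.lie_e_f]⟩

lemma exists_adj {α : Weight ℂ H L} (hα : α.IsNonZero)
    (hne : ∃ β : Weight ℂ H L, β.IsNonZero ∧ β ≠ α ∧ β ≠ -α) :
    ∃ β : Weight ℂ H L, β.IsNonZero ∧ β ≠ α ∧ β ≠ -α ∧ ∃ n : ℕ, β (coroot α) = -(n + 1 : ℂ) := by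
  by_cases hex : ∃ β : Weight ℂ H L, β.IsNonZero ∧ β ≠ α ∧ β ≠ -α ∧ β (coroot α) ≠ 0
  · obtain ⟨β, h1, h2, h3, h4⟩ := hex
    rw [apply_coroot_eq_cast α β] at h4
    set m : ℤ := chainBotCoeff α β - chainTopCoeff α β with hm
    have hm0 : m ≠ 0 := by intro h; simp [h] at h4
    rcases lt_or_gt_of_ne hm0 with hlt | hgt
    · refine ⟨β, h1, h2, h3, (-m - 1).toNat, ?_⟩
      rw [apply_coroot_eq_cast α β, ← hm]
      have : (((-m - 1).toNat : ℤ) : ℂ) = ((-m-1 : ℤ) : ℂ) := by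
        rw [Int.toNat_of_nonneg (by omega)]
      rw [← Int.cast_natCast, this]; push_cast; ring
    · refine ⟨-β, by simpa using h1, fun h => h3 (by rw [← h, neg_neg]),
        fun h => h2 (neg_injective h), (m - 1).toNat, ?_⟩
      rw [Weight.coe_neg, Pi.neg_apply, apply_coroot_eq_cast α β, ← hm]
      have : (((m - 1).toNat : ℤ) : ℂ) = ((m-1 : ℤ) : ℂ) := by
        rw [Int.toNat_of_nonneg (by omega)]
      rw [← Int.cast_natCast, this]; push_cast; ring
  · exfalso
    push Not at hex
    obtain ⟨β, h1, h2, h3⟩ := hne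
    have htop := RootPairing.IsIrreducible.eq_top_of_invtSubmodule_reflection
      (P := rootSystem H) (Submodule.span ℂ {α.toLinear}) (by
        intro γ
        rw [Module.End.mem_invtSubmodule, Submodule.span_le]
        rintro _ rfl
        change (rootSystem H).reflection γ α.toLinear ∈ Submodule.span ℂ {α.toLinear}
        rw [RootPairing.reflection_apply]
        by_cases hγ : (γ : Weight ℂ H L) = α ∨ (γ : Weight ℂ H L) = -α
        · refine sub_mem (Submodule.mem_span_singleton_self _) (Submodule.smul_mem _ _ ?_)
          rw [rootSystem_root_apply]
          rcases hγ with h | h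
          · rw [h]; exact Submodule.mem_span_singleton_self _
          · rw [h, Weight.toLinear_neg]; exact neg_mem (Submodule.mem_span_singleton_self _)
        · push Not at hγ
          have h5 := hex γ (LieSubalgebra.isNonZero_coe_root γ) hγ.1 hγ.2
          have h6 : (rootSystem H).pairing ⟨α, by simpa using hα⟩ γ = 0 := by
            rw [RootPairing.pairing_eq_zero_iff]; exact h5
          have h7 : (rootSystem H).coroot' γ α.toLinear = 0 := h6
          rw [h7, zero_smul, sub_zero]
          exact Submodule.mem_span_singleton_self _) (by
        simp only [ne_eq, Submodule.span_singleton_eq_bot]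
        intro h
        exact hα (by ext x; exact LinearMap.congr_fun h x))
    have h7 : β.toLinear ∈ Submodule.span ℂ {α.toLinear} := by rw [htop]; trivial
    obtain ⟨k, hk⟩ := Submodule.mem_span_singleton.1 h7
    rcases eq_neg_or_eq_of_eq_smul α β h1 k (by
      ext x; exact (LinearMap.congr_fun hk x).symm) with h | h
    · exact h3 h
    · exact h2 h

end roots
end Symp

namespace Symp
section roots2
open LieAlgebra LieModule LieAlgebra.IsKilling Module
variable {L : Type*} [LieRing L] [LieAlgebra ℂ L]

/-- Data of a Lie algebra generated by two `sl₂`-triples in `A₂`-position. -/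
structure A2 (h1 e1 f1 h2 e2 f2 : L) : Prop where
  t1 : IsSl2Triple h1 e1 f1
  t2 : IsSl2Triple h2 e2 f2
  e2f1 : ⁅e2, f1⁆ = 0
  e1f2 : ⁅e1, f2⁆ = 0
  h1e2 : ⁅h1, e2⁆ = -e2
  h1f2 : ⁅h1, f2⁆ = f2
  h2e1 : ⁅h2, e1⁆ = -e1
  h2f1 : ⁅h2, f1⁆ = f1
  h1h2 : ⁅h1, h2⁆ = 0

lemma A2.symm {h1 e1 f1 h2 e2 f2 : L} (h : A2 h1 e1 f1 h2 e2 f2) : A2 h2 e2 f2 h1 e1 f1 :=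
  ⟨h.t2, h.t1, h.e1f2, h.e2f1, h.h2e1, h.h2f1, h.h1e2, h.h1f2, by
    rw [← lie_skew, h.h1h2, neg_zero]⟩

variable [FiniteDimensional ℂ L] [LieAlgebra.IsSimple ℂ L]
variable {H : LieSubalgebra ℂ L} [H.IsCartanSubalgebra]

lemma pair_ind {α β : Weight ℂ H L} (hα : α.IsNonZero) (hβ : β.IsNonZero) (h1 : β ≠ α)
    (h2 : β ≠ -α) (x y : ℂ) (h : ∀ u : H, x * α u + y * β u = 0) : x = 0 ∧ y = 0 := by
  by_cases hy : y = 0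
  · subst hy
    refine ⟨?_, rfl⟩
    by_contra hx
    apply hα
    ext u
    have := h u
    simp only [zero_mul, add_zero, mul_eq_zero, hx, false_or] at this
    simpa using this
  · exfalso
    rcases eq_neg_or_eq_of_eq_smul α β hβ (-x / y) (by
      ext u
      have := h u
      simp only [Pi.smul_apply, smul_eq_mul]
      field_simp
      linear_combination this) with h | h
    · exact h2 h
    · exact h1 h

lemma trichotomy_aux {α β : Weight ℂ H L} (hα : α.IsNonZero) (hβ : β.IsNonZero) (hne1 : β ≠ α)
    (hne2 : β ≠ -α) {n : ℕ} (hn : β (coroot α) = -(n + 1 : ℂ)) :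
    10 ≤ finrank ℂ L ∨ (8 ≤ finrank ℂ L ∧ ∃ h1 e1 f1 h2 e2 f2 : L, A2 h1 e1 f1 h2 e2 f2 ∧
      ∀ K : LieSubalgebra ℂ L, e1 ∈ K → f1 ∈ K → e2 ∈ K → f2 ∈ K → K = ⊤) := by
  have hpi := pair_ind hα hβ hne1 hne2
  -- the sum
  obtain ⟨δ, hδ⟩ : ∃ δ : Weight ℂ H L, ∀ u, δ u = α u + β u := by
    have h1 : rootSpace H ((1:ℤ) • (α : H → ℂ) + β) ≠ ⊥ := by
      rw [rootSpace_zsmul_add_ne_bot_iff α β hα]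
      rw [apply_coroot_eq_cast α β] at hn
      have : ((chainBotCoeff α β : ℤ) - chainTopCoeff α β) = -(n + 1 : ℤ) := by
        exact_mod_cast hn
      omega
    exact ⟨⟨_, h1⟩, fun u => by simp⟩
  have hδ0 : δ.IsNonZero := by
    intro h
    have := hpi 1 1 (fun u => by rw [one_mul, one_mul, ← hδ, h.eq]; rfl)
    simp at this
  have key : ∀ (γ γ' : Weight ℂ H L) (x y x' y' : ℂ), (∀ u, γ u = x * α u + y * β u) →
      (∀ u, γ' u = x' * α u + y' * β u) → γ = γ' → x = x' ∧ y = y' := by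
    intro γ γ' x y x' y' h1 h2 h3
    have := hpi (x - x') (y - y') (fun u => by
      have e1 := h1 u
      rw [h3, h2 u] at e1
      linear_combination -e1)
    exact ⟨sub_eq_zero.1 this.1, sub_eq_zero.1 this.2⟩
  have ca : ∀ u, α u = 1 * α u + 0 * β u := fun u => by ring
  have cb : ∀ u, β u = 0 * α u + 1 * β u := fun u => by ring
  have cd : ∀ u, δ u = 1 * α u + 1 * β u := fun u => by rw [hδ]; ring
  have ca' : ∀ u, (-α) u = (-1) * α u + 0 * β u := fun u => by simp
  have cb' : ∀ u, (-β) u = 0 * α u + (-1) * β u := fun u => by simp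
  have cd' : ∀ u, (-δ) u = (-1) * α u + (-1) * β u := fun u => by simp [hδ]; ring
  have hH : 2 ≤ finrank ℂ H := by
    rw [← Subspace.dual_finrank_eq]
    have hli : LinearIndependent ℂ ![α.toLinear, β.toLinear] := by
      rw [LinearIndependent.pair_iff]
      intro x y hxy
      exact hpi x y (fun u => by simpa using LinearMap.congr_fun hxy u)
    simpa using hli.fintype_card_le_finrank
  have hnd : [α, -α, β, -β, δ, -δ].Nodup := by
    have m1 : (-1 : ℂ) ≠ 1 := by norm_num
    simp only [List.nodup_cons, List.mem_cons, List.not_mem_nil, not_or, or_false, not_false_eq_true,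
      List.nodup_nil, and_true]
    refine ⟨⟨?_, ?_, ?_, ?_, ?_⟩, ⟨?_, ?_, ?_, ?_⟩, ⟨?_, ?_, ?_⟩, ⟨?_, ?_⟩, ?_⟩ <;> intro h
    · have := key _ _ _ _ _ _ ca ca' h; norm_num at this
    · have := key _ _ _ _ _ _ ca cb h; norm_num at this
    · have := key _ _ _ _ _ _ ca cb' h; norm_num at this
    · have := key _ _ _ _ _ _ ca cd h; norm_num at this
    · have := key _ _ _ _ _ _ ca cd' h; norm_num at this
    · have := key _ _ _ _ _ _ ca' cb h; norm_num at this
    · have := key _ _ _ _ _ _ ca' cb' h; norm_num at this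
    · have := key _ _ _ _ _ _ ca' cd h; norm_num at this
    · have := key _ _ _ _ _ _ ca' cd' h; norm_num at this
    · have := key _ _ _ _ _ _ cb cb' h; norm_num at this
    · have := key _ _ _ _ _ _ cb cd h; norm_num at this
    · have := key _ _ _ _ _ _ cb cd' h; norm_num at this
    · have := key _ _ _ _ _ _ cb' cd h; norm_num at this
    · have := key _ _ _ _ _ _ cb' cd' h; norm_num at this
    · have := key _ _ _ _ _ _ cd cd' h; norm_num at this
  classical
  have hnz : ∀ γ ∈ [α, -α, β, -β, δ, -δ], γ.IsNonZero := by
    simp only [List.mem_cons, List.not_mem_nil, or_false]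
    rintro γ (rfl | rfl | rfl | rfl | rfl | rfl)
    all_goals first | assumption | (simp only [Weight.isNonZero_neg]; assumption)
  by_cases hall : ∀ γ : Weight ℂ H L, γ.IsNonZero → γ ∈ [α, -α, β, -β, δ, -δ]
  · right
    constructor
    · have := card_le [α, -α, β, -β, δ, -δ].toFinset (fun γ hγ => hnz γ (by simpa using hγ))
      rw [List.toFinset_card_of_nodup hnd] at this
      simp only [List.length_cons, List.length_nil] at this
      omega
    · -- non-roots
      have hno : ∀ χ : H → ℂ, ∀ x y : ℂ, (∀ u, χ u = x * α u + y * β u) → ¬ (x = 0 ∧ y = 0) →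
          ¬ (x = 1 ∧ y = 0) → ¬ (x = -1 ∧ y = 0) → ¬ (x = 0 ∧ y = 1) → ¬ (x = 0 ∧ y = -1) →
          ¬ (x = 1 ∧ y = 1) → ¬ (x = -1 ∧ y = -1) → rootSpace H χ = ⊥ := by
        intro χ x y hχ n0 n1 n2 n3 n4 n5 n6
        by_contra hbot
        let γ : Weight ℂ H L := ⟨χ, hbot⟩
        have hγ : ∀ u, γ u = x * α u + y * β u := hχ
        have hγ0 : γ.IsNonZero := by
          intro h
          exact n0 (hpi x y (fun u => by rw [← hγ, h.eq]; rfl))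
        have := hall γ hγ0
        simp only [List.mem_cons, List.not_mem_nil, or_false] at this
        rcases this with h | h | h | h | h | h
        · exact n1 (key _ _ _ _ _ _ hγ ca h)
        · exact n2 (key _ _ _ _ _ _ hγ ca' h)
        · exact n3 (key _ _ _ _ _ _ hγ cb h)
        · exact n4 (key _ _ _ _ _ _ hγ cb' h)
        · exact n5 (key _ _ _ _ _ _ hγ cd h)
        · exact n6 (key _ _ _ _ _ _ hγ cd' h)
      have hba : rootSpace H ((β : H → ℂ) + -α) = ⊥ :=
        hno _ (-1) 1 (fun u => by simp; ring) (by norm_num) (by norm_num) (by norm_num)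
          (by norm_num) (by norm_num) (by norm_num) (by norm_num)
      have hab : rootSpace H ((α : H → ℂ) + -β) = ⊥ :=
        hno _ 1 (-1) (fun u => by simp <;> ring) (by norm_num) (by norm_num) (by norm_num)
          (by norm_num) (by norm_num) (by norm_num) (by norm_num)
      have hbα : β (coroot α) = -1 := by
        have i1 : ¬ rootSpace H ((2:ℤ) • (α : H → ℂ) + β) ≠ ⊥ := not_not.2 (
          hno _ 2 1 (fun u => by simp) (by norm_num) (by norm_num) (by norm_num)
          (by norm_num) (by norm_num) (by norm_num) (by norm_num))
        have i2 : ¬ rootSpace H ((-1:ℤ) • (α : H → ℂ) + β) ≠ ⊥ := not_not.2 (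
          hno _ (-1) 1 (fun u => by simp) (by norm_num) (by norm_num) (by norm_num)
          (by norm_num) (by norm_num) (by norm_num) (by norm_num))
        have i3 : rootSpace H ((1:ℤ) • (α : H → ℂ) + β) ≠ ⊥ := by
          have : ((1:ℤ) • (α : H → ℂ) + β) = δ := by ext u; simp [hδ]
          rw [this]; exact δ.genWeightSpace_ne_bot
        rw [rootSpace_zsmul_add_ne_bot_iff α β hα] at i1 i2 i3
        rw [apply_coroot_eq_cast α β]
        have : ((chainBotCoeff α β : ℤ) - chainTopCoeff α β) = -1 := by omega
        rw [this]; simp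
      have haβ : α (coroot β) = -1 := by
        have i1 : ¬ rootSpace H ((2:ℤ) • (β : H → ℂ) + α) ≠ ⊥ := not_not.2 (
          hno _ 1 2 (fun u => by simp; ring) (by norm_num) (by norm_num) (by norm_num)
          (by norm_num) (by norm_num) (by norm_num) (by norm_num))
        have i2 : ¬ rootSpace H ((-1:ℤ) • (β : H → ℂ) + α) ≠ ⊥ := not_not.2 (
          hno _ 1 (-1) (fun u => by simp; ring) (by norm_num) (by norm_num) (by norm_num)
          (by norm_num) (by norm_num) (by norm_num) (by norm_num))
        have i3 : rootSpace H ((1:ℤ) • (β : H → ℂ) + α) ≠ ⊥ := by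
          have : ((1:ℤ) • (β : H → ℂ) + α) = δ := by ext u; simp [hδ]; ring
          rw [this]; exact δ.genWeightSpace_ne_bot
        rw [rootSpace_zsmul_add_ne_bot_iff β α hβ] at i1 i2 i3
        rw [apply_coroot_eq_cast β α]
        have : ((chainBotCoeff β α : ℤ) - chainTopCoeff β α) = -1 := by omega
        rw [this]; simp
      obtain ⟨h1, e1, f1, t1, he1, hf1⟩ := exists_isSl2Triple_of_weight_isNonZero hα
      obtain ⟨h2, e2, f2, t2, he2, hf2⟩ := exists_isSl2Triple_of_weight_isNonZero hβ
      have hh1 := t1.h_eq_coroot hα he1 hf1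
      have hh2 := t2.h_eq_coroot hβ he2 hf2
      have A : A2 h1 e1 f1 h2 e2 f2 := by
        refine ⟨t1, t2, ?_, ?_, ?_, ?_, ?_, ?_, ?_⟩
        · have : ⁅e2, f1⁆ ∈ rootSpace H ((β : H → ℂ) + -α) :=
            lie_mem_genWeightSpace_of_mem_genWeightSpace he2 hf1
          rw [hba] at this; simpa using this
        · have : ⁅e1, f2⁆ ∈ rootSpace H ((α : H → ℂ) + -β) :=
            lie_mem_genWeightSpace_of_mem_genWeightSpace he1 hf2
          rw [hab] at this; simpa using this
        · have := lie_eq_smul_of_mem_rootSpace he2 (coroot α)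
          rw [hbα] at this
          rw [hh1]; simpa using this
        · have := lie_eq_smul_of_mem_rootSpace hf2 (coroot α)
          rw [Pi.neg_apply, hbα] at this
          rw [hh1]; simpa using this
        · have := lie_eq_smul_of_mem_rootSpace he1 (coroot β)
          rw [haβ] at this
          rw [hh2]; simpa using this
        · have := lie_eq_smul_of_mem_rootSpace hf1 (coroot β)
          rw [Pi.neg_apply, haβ] at this
          rw [hh2]; simpa using this
        · rw [hh1, hh2, ← LieSubalgebra.coe_bracket, trivial_lie_zero]; rfl
      refine ⟨h1, e1, f1, h2, e2, f2, A, ?_⟩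
      intro K k1 k2 k3 k4
      refine gen_top (H := H) K ?_
      intro γ hγ x hx
      have hδ' : (α : H → ℂ) + β = δ := by ext u; simp [hδ]
      have hδ'' : (-α : H → ℂ) + -β = (-δ : Weight ℂ H L) := by ext u; simp [hδ]; ring
      have := hall γ hγ
      simp only [List.mem_cons, List.not_mem_nil, or_false] at this
      rcases this with rfl | rfl | rfl | rfl | rfl | rfl
      · obtain ⟨c, rfl⟩ := root_line hγ he1 hx t1.e_ne_zero; exact K.smul_mem c k1
      · obtain ⟨c, rfl⟩ := root_line hγ (by simpa using hf1) hx t1.f_ne_zero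
        exact K.smul_mem c k2
      · obtain ⟨c, rfl⟩ := root_line hγ he2 hx t2.e_ne_zero; exact K.smul_mem c k3
      · obtain ⟨c, rfl⟩ := root_line hγ (by simpa using hf2) hx t2.f_ne_zero
        exact K.smul_mem c k4
      · have h5 := lie_mem_genWeightSpace_of_mem_genWeightSpace he1 he2
        rw [hδ'] at h5
        obtain ⟨c, rfl⟩ := root_line hγ h5 hx (by
          intro h0
          have h6 := leibniz_lie f1 e1 e2
          rw [h0, lie_zero, ← lie_skew f1 e1, t1.lie_e_f, neg_lie, A.h1e2, ← lie_skew f1 e2, A.e2f1]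
            at h6
          simp at h6
          exact t2.e_ne_zero h6.symm)
        exact K.smul_mem c (K.lie_mem k1 k3)
      · have h5 := lie_mem_genWeightSpace_of_mem_genWeightSpace hf1 hf2
        rw [hδ''] at h5
        obtain ⟨c, rfl⟩ := root_line hγ h5 hx (by
          intro h0
          have h6 := leibniz_lie e1 f1 f2
          rw [h0, lie_zero, t1.lie_e_f, A.h1f2, A.e1f2] at h6
          simp at h6
          exact t2.f_ne_zero h6.symm)
        exact K.smul_mem c (K.lie_mem k2 k4)
  · left
    push Not at hall
    obtain ⟨γ, hγ0, hγ⟩ := hall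
    have hnd' : (γ :: -γ :: [α, -α, β, -β, δ, -δ]).Nodup := by
      rw [List.nodup_cons, List.nodup_cons, List.mem_cons, not_or]
      refine ⟨⟨?_, hγ⟩, ?_, hnd⟩
      · intro h
        apply hγ0
        ext u
        have h2 : γ u = -γ u := DFunLike.congr_fun h u
        have : (2:ℂ) * γ u = 0 := by linear_combination h2
        simpa using this
      · intro h
        apply hγ
        simp only [List.mem_cons, List.not_mem_nil, or_false, neg_inj, neg_eq_iff_eq_neg] at h ⊢
        rcases h with h | h | h | h | h | h <;> simp [h]
    have := card_le (γ :: -γ :: [α, -α, β, -β, δ, -δ]).toFinset (fun γ' hγ' => by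
      rw [List.mem_toFinset, List.mem_cons, List.mem_cons] at hγ'
      rcases hγ' with rfl | rfl | h
      · exact hγ0
      · simpa using hγ0
      · exact hnz _ h)
    rw [List.toFinset_card_of_nodup hnd'] at this
    simp only [List.length_cons, List.length_nil] at this
    omega

variable (L) in
lemma trichotomy : (∃ h e f : L, IsSl2Triple h e f ∧ ∀ x : L, x ∈ Submodule.span ℂ {e, f, h}) ∨
    10 ≤ finrank ℂ L ∨ (8 ≤ finrank ℂ L ∧ ∃ h1 e1 f1 h2 e2 f2 : L, A2 h1 e1 f1 h2 e2 f2 ∧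
      ∀ K : LieSubalgebra ℂ L, e1 ∈ K → f1 ∈ K → e2 ∈ K → f2 ∈ K → K = ⊤) := by
  obtain ⟨x, hx⟩ := exists_isCartanSubalgebra_engel ℂ L
  set H := LieSubalgebra.engel ℂ x
  obtain ⟨α, hα⟩ : ∃ α : Weight ℂ H L, α.IsNonZero := by
    by_contra hno
    push Not at hno
    have : (⊥ : LieSubalgebra ℂ L) = ⊤ := gen_top (H := H) ⊥ (fun γ hγ => (hγ (hno γ)).elim)
    have hna := LieAlgebra.IsSimple.non_abelian (R := ℂ) (L := L)
    apply hna
    constructor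
    intro a b
    have ha : a ∈ (⊥ : LieSubalgebra ℂ L) := by rw [this]; trivial
    rw [LieSubalgebra.mem_bot] at ha
    rw [ha, zero_lie]
  by_cases h : ∀ β : Weight ℂ H L, β.IsNonZero → β = α ∨ β = -α
  · exact Or.inl (case_one hα h)
  · right
    push Not at h
    obtain ⟨β, h1, h2, h3, n, hn⟩ := exists_adj hα h
    exact trichotomy_aux hα h1 h2 h3 hn

end roots2
end Symp

namespace Symp
section dims
open Module
variable {g : Type*} [LieRing g] [LieAlgebra ℂ g]
variable {s : LieSubalgebra ℂ g} {V : Fin 4 → Submodule ℂ g}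

/-- The action of `s` on an invariant subspace. -/
noncomputable def rep (W : Submodule ℂ g) (hW : ∀ x ∈ s, ∀ w ∈ W, ⁅x, w⁆ ∈ W) :
    s →ₗ[ℂ] Module.End ℂ W where
  toFun x := (LieModule.toEnd ℂ g g (x : g)).restrict (fun w hw => hW x x.2 w hw)
  map_add' x y := by ext w; exact add_lie (x : g) (y : g) (w : g)
  map_smul' c x := by ext w; exact smul_lie c (x : g) (w : g)

lemma rep_apply (W : Submodule ℂ g) (hW : ∀ x ∈ s, ∀ w ∈ W, ⁅x, w⁆ ∈ W) (x : s) (w : W) :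
    ((rep W hW x w : W) : g) = ⁅(x : g), (w : g)⁆ := rfl

lemma finrank_lt_sq [FiniteDimensional ℂ g] (hs : LieAlgebra.IsSimple ℂ s) (W : Submodule ℂ g)
    (hW : ∀ x ∈ s, ∀ w ∈ W, ⁅x, w⁆ ∈ W) (hnt : ∃ x ∈ s, ∃ v ∈ W, ⁅x, v⁆ ≠ 0) :
    finrank ℂ s < finrank ℂ W * finrank ℂ W := by
  have hbr : ∀ x y : s, rep W hW ⁅x, y⁆ = rep W hW x * rep W hW y - rep W hW y * rep W hW x := by
    intro x y
    ext w
    simp only [rep_apply, LinearMap.sub_apply, Module.End.mul_apply, AddSubgroupClass.coe_sub]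
    rw [LieSubalgebra.coe_bracket, lie_lie]
  have hinj : Function.Injective (rep W hW) := by
    rw [← LinearMap.ker_eq_bot]
    let K : LieIdeal ℂ s := { LinearMap.ker (rep W hW) with
      lie_mem := by
        intro x y hy
        change rep W hW ⁅x, y⁆ = 0
        have hy : rep W hW y = 0 := hy
        rw [hbr, hy]; simp }
    rcases hs.eq_bot_or_eq_top K with h | h
    · have : K.toSubmodule = ⊥ := by rw [h]; rfl
      exact this
    · exfalso
      obtain ⟨x, hx, v, hv, hne⟩ := hnt
      have : (⟨x, hx⟩ : s) ∈ K := by rw [h]; trivial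
      have h0 : rep W hW ⟨x, hx⟩ = 0 := this
      apply hne
      rw [← rep_apply W hW ⟨x, hx⟩ ⟨v, hv⟩, h0]; rfl
  have hperf : ⁅(⊤ : LieIdeal ℂ s), (⊤ : LieIdeal ℂ s)⁆ = ⊤ := by
    rcases hs.eq_bot_or_eq_top ⁅(⊤ : LieIdeal ℂ s), (⊤ : LieIdeal ℂ s)⁆ with h | h
    · exfalso
      apply hs.non_abelian
      refine ⟨fun x y => ?_⟩
      have : ⁅x, y⁆ ∈ ⁅(⊤ : LieIdeal ℂ s), (⊤ : LieIdeal ℂ s)⁆ :=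
        LieSubmodule.lie_mem_lie (by trivial) (by trivial)
      rw [h] at this
      simpa using this
    · exact h
  have htr : ∀ x : s, LinearMap.trace ℂ W (rep W hW x) = 0 := by
    intro x
    have hx : x ∈ ⁅(⊤ : LieIdeal ℂ s), (⊤ : LieIdeal ℂ s)⁆ := by rw [hperf]; trivial
    rw [← LieSubmodule.mem_toSubmodule, LieSubmodule.lieIdeal_oper_eq_linear_span'] at hx
    refine Submodule.span_induction (p := fun x _ => LinearMap.trace ℂ W (rep W hW x) = 0)
      ?_ (by simp) ?_ ?_ hx
    · rintro _ ⟨a, -, b, -, rfl⟩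
      rw [hbr, map_sub, LinearMap.trace_mul_comm, sub_self]
    · intro a b _ _ ha hb; rw [map_add, map_add, ha, hb, add_zero]
    · intro c a _ ha; rw [map_smul, map_smul, ha, smul_zero]
  have hWpos : finrank ℂ W ≠ 0 := by
    intro h0
    obtain ⟨x, hx, v, hv, hne⟩ := hnt
    rw [Submodule.finrank_eq_zero] at h0
    rw [h0] at hv
    apply hne
    rw [(Submodule.mem_bot ℂ).1 hv, lie_zero]
  have hlt : LinearMap.range (rep W hW) < ⊤ := by
    rw [lt_top_iff_ne_top]
    intro htop
    have : (1 : Module.End ℂ W) ∈ LinearMap.range (rep W hW) := by rw [htop]; trivial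
    obtain ⟨x, hx⟩ := this
    have := htr x
    rw [hx, LinearMap.trace_one] at this
    exact hWpos (by exact_mod_cast this)
  have := Submodule.finrank_lt hlt.ne
  rw [LinearMap.finrank_range_of_inj hinj, Module.finrank_linearMap] at this
  exact this

lemma exists_lie_ne {A B : Submodule ℂ g} (h : lieSpan2 g A B ≠ ⊥) :
    ∃ a ∈ A, ∃ b ∈ B, ⁅a, b⁆ ≠ 0 := by
  by_contra hcon
  push Not at hcon
  exact h (lieSpan2_eq_bot.2 hcon)

lemma Data.nt2 [FiniteDimensional ℂ g] (D : Data s V) (h8 : 8 ≤ finrank ℂ s) :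
    ∃ x ∈ s, ∃ v ∈ V 2, ⁅x, v⁆ ≠ 0 := by
  by_contra hcon
  push Not at hcon
  have hA := finrank_lt_sq D.levi.1 (V 0) (fun x hx w hw => D.toSetup.inv hx hw) D.nt0
  have hA3 : 3 ≤ finrank ℂ (V 0) := by nlinarith
  obtain ⟨c, hc, hc0⟩ := Submodule.exists_mem_ne_zero_of_ne_bot (D.ne 2)
  have hspan : V 2 = Submodule.span ℂ {c} := by
    rcases (D.dec.1 2).2.2 (Submodule.span ℂ {c}) (by simpa using hc) (by
      intro x hx w hw
      have hw2 : w ∈ V 2 := (Submodule.span_le.2 (by simpa using hc)) hw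
      rw [hcon x hx w hw2]; exact zero_mem _) with h | h
    · rw [Submodule.span_singleton_eq_bot] at h; exact (hc0 h).elim
    · exact h.symm
  have hV2 : ∀ v ∈ V 2, ∃ t : ℂ, v = t • c := by
    intro v hv
    rw [hspan, Submodule.mem_span_singleton] at hv
    obtain ⟨t, ht⟩ := hv
    exact ⟨t, ht.symm⟩
  have hinj : ∀ a ∈ V 0, ⁅a, c⁆ = 0 → a = 0 := by
    intro a ha h0
    refine D.toSetup.ann (i := 0) (j := 2) (by rw [D.b02]; exact D.ne 3) ha ?_
    intro y hy
    obtain ⟨t, rfl⟩ := hV2 y hy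
    rw [lie_smul, h0, smul_zero]
  -- bound of the dimension of `V 0`
  suffices ∃ x y : g, V 0 ≤ Submodule.span ℂ {x, y} by
    obtain ⟨x, y, hxy⟩ := this
    have h1 := Submodule.finrank_mono hxy
    classical
    have h2 := finrank_span_finset_le_card (R := ℂ) ({x, y} : Finset g)
    have h3 := Finset.card_le_two (a := x) (b := y)
    rw [Set.finrank, Finset.coe_pair] at h2
    omega
  have hA1 : (lieSpan2 g (V 0) (V 1) = V 2) → (∀ a ∈ V 0, ∀ a' ∈ V 0, ∀ b ∈ V 1, ⁅⁅a, a'⁆, b⁆ = 0) →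
      ∃ x y : g, V 0 ≤ Submodule.span ℂ {x, y} := by
    intro b01 hz
    obtain ⟨a, ha, b, hb, hne⟩ := exists_lie_ne (A := V 0) (B := V 1) (by rw [b01]; exact D.ne 2)
    refine ⟨a, a, fun a' ha' => ?_⟩
    obtain ⟨p, hp⟩ := hV2 _ (by rw [← b01]; exact lie_mem_lieSpan2 ha hb)
    obtain ⟨q, hq⟩ := hV2 _ (by rw [← b01]; exact lie_mem_lieSpan2 ha' hb)
    have hp0 : p ≠ 0 := by rintro rfl; exact hne (by rw [hp, zero_smul])
    have hj := leibniz_lie a' a b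
    rw [hz a' ha' a ha b hb, hp, hq, lie_smul, lie_smul, zero_add, ← sub_eq_zero, ← smul_lie,
      ← smul_lie, ← sub_lie] at hj
    have h0 := hinj _ (sub_mem (Submodule.smul_mem _ _ ha') (Submodule.smul_mem _ _ ha)) hj
    have : a' = (p⁻¹ * q) • a := by
      rw [mul_smul, ← sub_eq_zero.1 h0, smul_smul, inv_mul_cancel₀ hp0, one_smul]
    rw [this]
    exact Submodule.smul_mem _ _ (Submodule.subset_span (by simp))
  have h13 : ∀ x ∈ V 3, ∀ b ∈ V 1, ⁅x, b⁆ = 0 := by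
    intro x hx b hb
    rw [← lie_skew, lieSpan2_eq_bot.1 (D.bi3 1) b hb x hx, neg_zero]
  rcases D.pat with ⟨b00, b01, b11, b12⟩ | ⟨b00, b01, b11, b12⟩ | ⟨b00, b01, b11, b12⟩ |
    ⟨b00, b01, b12⟩
  · refine hA1 b01 fun a ha a' ha' b hb => ?_
    rw [← lie_skew, lieSpan2_eq_bot.1 b12 b hb _ (by rw [← b00]; exact lie_mem_lieSpan2 ha ha'),
      neg_zero]
  · obtain ⟨a, ha, b, hb, hne⟩ := exists_lie_ne (A := V 0) (B := V 0) (by rw [b00]; exact D.ne 2)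
    refine ⟨a, b, fun a' ha' => ?_⟩
    have hm : ∀ x ∈ V 0, ∀ y ∈ V 0, ∃ t : ℂ, ⁅x, y⁆ = t • c := fun x hx y hy =>
      hV2 _ (by rw [← b00]; exact lie_mem_lieSpan2 hx hy)
    obtain ⟨p, hp⟩ := hm a ha b hb
    obtain ⟨q, hq⟩ := hm a' ha' a ha
    obtain ⟨r, hr⟩ := hm a' ha' b hb
    have hp0 : p ≠ 0 := by rintro rfl; exact hne (by rw [hp, zero_smul])
    have hj := leibniz_lie a' a b
    rw [hp, hq, hr, lie_smul, lie_smul, smul_lie, ← lie_skew c b] at hj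
    have hj' : ⁅p • a' + q • b - r • a, c⁆ = 0 := by
      rw [sub_lie, add_lie, smul_lie, smul_lie, smul_lie, hj]
      module
    have h0 := hinj _ (sub_mem (add_mem (Submodule.smul_mem _ _ ha') (Submodule.smul_mem _ _ hb))
      (Submodule.smul_mem _ _ ha)) hj'
    have : a' = (p⁻¹ * r) • a - (p⁻¹ * q) • b := by
      have : p • a' = r • a - q • b := by
        rw [← sub_eq_zero, ← h0]; abel
      rw [mul_smul, mul_smul, ← smul_sub, ← this, smul_smul, inv_mul_cancel₀ hp0, one_smul]
    rw [this]
    exact sub_mem (Submodule.smul_mem _ _ (Submodule.subset_span (by simp)))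
      (Submodule.smul_mem _ _ (Submodule.subset_span (by simp)))
  · exact hA1 b01 fun a ha a' ha' b hb => h13 _ (by rw [← b00]; exact lie_mem_lieSpan2 ha ha') b hb
  · exact hA1 b01 fun a ha a' ha' b hb => h13 _ (by rw [← b00]; exact lie_mem_lieSpan2 ha ha') b hb

lemma Data.nt [FiniteDimensional ℂ g] (D : Data s V) (h8 : 8 ≤ finrank ℂ s) (i : Fin 4) :
    ∃ x ∈ s, ∃ v ∈ V i, ⁅x, v⁆ ≠ 0 := by
  fin_cases i
  · exact D.nt0
  · exact D.nt1
  · exact D.nt2 h8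
  · exact D.nt3

lemma Data.sq [FiniteDimensional ℂ g] (D : Data s V) (h8 : 8 ≤ finrank ℂ s) (i : Fin 4) :
    finrank ℂ s < finrank ℂ (V i) * finrank ℂ (V i) :=
  finrank_lt_sq D.levi.1 (V i) (fun x hx w hw => D.toSetup.inv hx hw) (D.nt h8 i)

end dims
end Symp

namespace Symp
section a2
open Module
variable {g : Type*} [LieRing g] [LieAlgebra ℂ g]
variable {s : LieSubalgebra ℂ g} {V : Fin 4 → Submodule ℂ g}
variable {h1 e1 f1 h2 e2 f2 : g}

/-- The sum of the eigenspaces of `ad H` for eigenvalues in the class `w + 3ℤ`. -/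
noncomputable def cls (H : g) (w : ℤ) : Submodule ℂ g :=
  ⨆ μ ∈ {μ : ℂ | ∃ n : ℤ, μ = (w + 3 * n : ℤ)}, Module.End.eigenspace (LieModule.toEnd ℂ g g H) μ

lemma mem_cls {H x : g} {w : ℤ} (n : ℤ) (hx : ⁅H, x⁆ = ((w + 3 * n : ℤ) : ℂ) • x) : x ∈ cls H w := by
  refine Submodule.mem_iSup_of_mem ((w + 3 * n : ℤ) : ℂ) (Submodule.mem_iSup_of_mem ⟨n, rfl⟩ ?_)
  rw [Module.End.mem_eigenspace_iff]; exact hx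

lemma cls_induction {H : g} {w : ℤ} {P : g → Prop} {x : g} (hx : x ∈ cls H w)
    (h1 : ∀ n : ℤ, ∀ x, ⁅H, x⁆ = ((w + 3 * n : ℤ) : ℂ) • x → P x) (h0 : P 0)
    (ha : ∀ x y, P x → P y → P (x + y)) : P x := by
  unfold cls at hx
  rw [iSup_subtype'] at hx
  refine Submodule.iSup_induction _ (motive := P) hx ?_ h0 ha
  rintro ⟨_, n, rfl⟩ y hy
  rw [Module.End.mem_eigenspace_iff] at hy
  exact h1 n y hy

lemma lie_mem_cls {H x y : g} {w w' : ℤ} (hx : x ∈ cls H w) (hy : y ∈ cls H w') :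
    ⁅x, y⁆ ∈ cls H (w + w') := by
  refine cls_induction (P := fun x => ⁅x, y⁆ ∈ cls H (w + w')) hx ?_ (by simp) ?_
  · intro n x hx
    refine cls_induction (P := fun y => ⁅x, y⁆ ∈ cls H (w + w')) hy ?_ (by simp) ?_
    · intro m y hy
      refine mem_cls (n + m) ?_
      rw [leibniz_lie, hx, hy, smul_lie, lie_smul, ← add_smul]
      congr 1; push_cast; ring
    · intro a b ha hb; rw [lie_add]; exact add_mem ha hb
  · intro a b ha hb; rw [add_lie]; exact add_mem ha hb

lemma cls_eq {H x : g} {w w' : ℤ} (hx : x ∈ cls H w) (hy : x ∈ cls H w') (h0 : x ≠ 0) :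
    ∃ n : ℤ, w - w' = 3 * n := by
  by_contra hcon
  push Not at hcon
  have := (Module.End.eigenspaces_iSupIndep (LieModule.toEnd ℂ g g H)).disjoint_biSup_biSup
    (s := {μ : ℂ | ∃ n : ℤ, μ = (w + 3 * n : ℤ)}) (t := {μ : ℂ | ∃ n : ℤ, μ = (w' + 3 * n : ℤ)}) (by
      rw [Set.disjoint_left]
      rintro μ ⟨n, rfl⟩ ⟨m, hm⟩
      have hm : w + 3 * n = w' + 3 * m := by exact_mod_cast hm
      exact hcon (m - n) (by linarith))
  exact h0 (Submodule.disjoint_def.1 this x hx hy)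

lemma cls_zero_lie {H x y : g} {w : ℤ} (hx : x ∈ cls H 0) (hy : y ∈ cls H w) : ⁅x, y⁆ ∈ cls H w := by
  have := lie_mem_cls hx hy
  rwa [zero_add] at this

/-- the generation property -/
def Gen (s : LieSubalgebra ℂ g) (e1 f1 e2 f2 : g) : Prop :=
  ∀ W : Submodule ℂ g, (∀ w ∈ W, ⁅e1, w⁆ ∈ W) → (∀ w ∈ W, ⁅f1, w⁆ ∈ W) → (∀ w ∈ W, ⁅e2, w⁆ ∈ W) →
    (∀ w ∈ W, ⁅f2, w⁆ ∈ W) → Invariant g s W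

lemma gen_of {s : LieSubalgebra ℂ g} {e1 f1 e2 f2 : s}
    (h : ∀ K : LieSubalgebra ℂ s, e1 ∈ K → f1 ∈ K → e2 ∈ K → f2 ∈ K → K = ⊤) :
    Gen s (e1 : g) f1 e2 f2 := by
  intro W a1 a2 a3 a4
  let K : LieSubalgebra ℂ s :=
    { carrier := {x | ∀ w ∈ W, ⁅(x : g), w⁆ ∈ W}
      add_mem' := fun {a b} ha hb w hw => by
        change ⁅(a : g) + b, w⁆ ∈ W; rw [add_lie]; exact add_mem (ha w hw) (hb w hw)
      zero_mem' := fun w hw => by simp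
      smul_mem' := fun c a ha w hw => by
        change ⁅c • (a : g), w⁆ ∈ W; rw [smul_lie]; exact W.smul_mem c (ha w hw)
      lie_mem' := fun {a b} ha hb w hw => by
        rw [LieSubalgebra.coe_bracket, lie_lie]
        exact sub_mem (ha _ (hb w hw)) (hb _ (ha w hw)) }
  have hK := h K a1 a2 a3 a4
  intro x hx w hw
  have : (⟨x, hx⟩ : s) ∈ K := by rw [hK]; trivial
  exact this w hw

/-- Highest weight vectors for an `A₂`-configuration. -/
structure HW (h1 e1 h2 e2 : g) (W : Submodule ℂ g) (p q : ℕ) (v : g) : Prop where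
  mem : v ∈ W
  ne : v ≠ 0
  h1v : ⁅h1, v⁆ = (p : ℂ) • v
  h2v : ⁅h2, v⁆ = (q : ℂ) • v
  e1v : ⁅e1, v⁆ = 0
  e2v : ⁅e2, v⁆ = 0

lemma HW.symm {W : Submodule ℂ g} {p q : ℕ} {v : g} (h : HW h1 e1 h2 e2 W p q v) :
    HW h2 e2 h1 e1 W q p v := ⟨h.mem, h.ne, h.h2v, h.h1v, h.e2v, h.e1v⟩

lemma A2.exists_hw [FiniteDimensional ℂ g] (A : A2 h1 e1 f1 h2 e2 f2) {W : Submodule ℂ g} (hW0 : W ≠ ⊥)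
    (w1 : ∀ w ∈ W, ⁅h1, w⁆ ∈ W) (w2 : ∀ w ∈ W, ⁅h2, w⁆ ∈ W)
    (w3 : ∀ w ∈ W, ⁅e1, w⁆ ∈ W) (w4 : ∀ w ∈ W, ⁅e2, w⁆ ∈ W) :
    ∃ p q v, HW h1 e1 h2 e2 W p q v := by
  obtain ⟨μ, ⟨w, hw, hw0, hμ⟩, hmax⟩ := exists_max_eigen W hW0 (h1 + h2) (fun w hw => by
    rw [add_lie]; exact add_mem (w1 w hw) (w2 w hw))
  let U : Submodule ℂ g := W ⊓ Module.End.eigenspace (LieModule.toEnd ℂ g g (h1 + h2)) μ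
  have hU : ∀ x, x ∈ U ↔ x ∈ W ∧ ⁅h1 + h2, x⁆ = μ • x := by
    intro x
    rw [Submodule.mem_inf, Module.End.mem_eigenspace_iff]; rfl
  have hcomm : ⁅h1 + h2, h1⁆ = 0 := by
    rw [add_lie, lie_self, zero_add, ← lie_skew, A.h1h2, neg_zero]
  obtain ⟨ν, ⟨v, hv, hv0, hν⟩, -⟩ := exists_max_eigen U (by
      intro h0
      have : w ∈ U := (hU w).2 ⟨hw, hμ⟩
      rw [h0] at this
      exact hw0 (by simpa using this)) h1 (fun x hx => by
    rw [hU] at hx ⊢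
    refine ⟨w1 x hx.1, ?_⟩
    rw [leibniz_lie, hcomm, hx.2, lie_smul, zero_lie, zero_add])
  rw [hU] at hv
  have hν2 : ⁅h2, v⁆ = (μ - ν) • v := by
    have := hv.2
    rw [add_lie, hν] at this
    rw [sub_smul, ← this]; abel
  have ee1 : ⁅e1, v⁆ = 0 := by
    refine hmax (μ + 1) (by simp) _ (w3 v hv.1) ?_
    rw [leibniz_lie, hv.2, add_lie, A.t1.lie_h_e_smul ℂ, A.h2e1, lie_smul, add_lie, smul_lie, neg_lie]
    module
  have ee2 : ⁅e2, v⁆ = 0 := by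
    refine hmax (μ + 1) (by simp) _ (w4 v hv.1) ?_
    rw [leibniz_lie, hv.2, add_lie, A.t2.lie_h_e_smul ℂ, A.h1e2, lie_smul, add_lie, smul_lie, neg_lie]
    module
  have P1 : A.t1.HasPrimitiveVectorWith v ν := ⟨hv0, hν, ee1⟩
  have P2 : A.t2.HasPrimitiveVectorWith v (μ - ν) := ⟨hv0, hν2, ee2⟩
  obtain ⟨p, hp⟩ := P1.exists_nat
  obtain ⟨q, hq⟩ := P2.exists_nat
  exact ⟨p, q, v, hv.1, hv0, by rw [hν, hp], by rw [hν2, hq], ee1, ee2⟩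

/-- The vectors `f2 ^ k f1 ^ j v`. -/
lemma A2.vec (A : A2 h1 e1 f1 h2 e2 f2) {W : Submodule ℂ g}
    (w1 : ∀ w ∈ W, ⁅f1, w⁆ ∈ W) (w2 : ∀ w ∈ W, ⁅f2, w⁆ ∈ W) {p q : ℕ} {v : g}
    (hv : HW h1 e1 h2 e2 W p q v) {j k : ℕ} (hj : j ≤ p) (hk : k ≤ q + j) :
    ∃ u ∈ W, u ≠ 0 ∧ ⁅(11 : ℂ) • h1 + (7 : ℂ) • h2, u⁆ =
      (11 * (p : ℂ) + 7 * q - 15 * j - 3 * k) • u := by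
  have P1 : A.t1.HasPrimitiveVectorWith v (p : ℂ) := ⟨hv.ne, hv.h1v, hv.e1v⟩
  have a1 : ∀ j : ℕ, Fp f1 j v ∈ W ∧ ⁅h1, Fp f1 j v⁆ = ((p : ℂ) - 2 * j) • Fp f1 j v ∧
      ⁅h2, Fp f1 j v⁆ = ((q + j : ℕ) : ℂ) • Fp f1 j v ∧ ⁅e2, Fp f1 j v⁆ = 0 := by
    intro j
    induction j with
    | zero => simp only [Fp_zero]; exact ⟨hv.mem, by simpa using hv.h1v, by simpa using hv.h2v, hv.e2v⟩
    | succ j ih =>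
      obtain ⟨i1, i2, i3, i4⟩ := ih
      rw [Fp_succ]
      refine ⟨w1 _ i1, ?_, ?_, ?_⟩
      · rw [leibniz_lie, A.t1.lie_lie_smul_f ℂ, i2, lie_smul, neg_lie, smul_lie]
        push_cast; module
      · rw [leibniz_lie, A.h2f1, i3, lie_smul]
        push_cast; module
      · rw [leibniz_lie, A.e2f1, i4]; simp
  obtain ⟨i1, i2, i3, i4⟩ := a1 j
  have P2 : A.t2.HasPrimitiveVectorWith (Fp f1 j v) ((q + j : ℕ) : ℂ) :=
    ⟨P1.pow_toEnd_f_ne_zero_of_eq_nat rfl hj, i3, i4⟩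
  refine ⟨Fp f2 k (Fp f1 j v), ?_, P2.pow_toEnd_f_ne_zero_of_eq_nat rfl hk, ?_⟩
  · clear hk
    induction k with
    | zero => rw [Fp_zero]; exact i1
    | succ k ih => rw [Fp_succ]; exact w2 _ ih
  · clear hk
    induction k with
    | zero =>
      rw [Fp_zero, add_lie, smul_lie, smul_lie, i2, i3]
      push_cast; module
    | succ k ih =>
      rw [Fp_succ, leibniz_lie, ih, lie_smul, add_lie, smul_lie, smul_lie, A.h1f2,
        A.t2.lie_lie_smul_f ℂ, add_lie, smul_lie, smul_lie, neg_lie, smul_lie]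
      push_cast; module

lemma five [FiniteDimensional ℂ g] {W : Submodule ℂ g} {H : g} (μ : Fin 5 → ℂ)
    (hμ : Function.Injective μ) (h : ∀ i, ∃ u ∈ W, u ≠ 0 ∧ ⁅H, u⁆ = μ i • u) : 5 ≤ finrank ℂ W := by
  choose u hu hu0 hH using h
  have hli := Module.End.eigenvectors_linearIndependent' (LieModule.toEnd ℂ g g H) μ hμ u (fun i =>
    ⟨by rw [Module.End.mem_eigenspace_iff]; exact hH i, hu0 i⟩)
  have hli' : LinearIndependent ℂ (fun i => (⟨u i, hu i⟩ : W)) :=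
    LinearIndependent.of_comp W.subtype hli
  simpa using hli'.fintype_card_le_finrank

lemma A2.dim_aux [FiniteDimensional ℂ g] (A : A2 h1 e1 f1 h2 e2 f2) {W : Submodule ℂ g}
    (w1 : ∀ w ∈ W, ⁅f1, w⁆ ∈ W) (w2 : ∀ w ∈ W, ⁅f2, w⁆ ∈ W) {p q : ℕ} {v : g}
    (hv : HW h1 e1 h2 e2 W p q v) (hpq : (1 ≤ p ∧ 1 ≤ q) ∨ 3 ≤ p) : 5 ≤ finrank ℂ W := by
  have key : ∀ J K : Fin 5 → ℕ, (Function.Injective fun i => 15 * J i + 3 * K i) → (∀ i, J i ≤ p) →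
      (∀ i, K i ≤ q + J i) → 5 ≤ finrank ℂ W := by
    intro J K hinj hJ hK
    refine five (H := (11 : ℂ) • h1 + (7 : ℂ) • h2)
      (fun i => 11 * (p : ℂ) + 7 * q - 15 * J i - 3 * K i) ?_ (fun i => A.vec w1 w2 hv (hJ i) (hK i))
    intro i j hij
    apply hinj
    have : (15 * J i + 3 * K i : ℂ) = 15 * J j + 3 * K j := by
      simp only at hij
      linear_combination -hij
    exact_mod_cast this
  rcases hpq with ⟨hp, hq⟩ | hp
  · refine key ![0, 0, 1, 1, 1] ![0, 1, 0, 1, 2] (by decide) ?_ ?_ <;>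
    · intro i; fin_cases i <;> simp <;> omega
  · refine key ![0, 1, 1, 2, 2] ![0, 0, 1, 0, 1] (by decide) ?_ ?_ <;>
    · intro i; fin_cases i <;> simp <;> omega

lemma Data.a2 [FiniteDimensional ℂ g] (D : Data s V) (h8 : 8 ≤ finrank ℂ s)
    (A : A2 h1 e1 f1 h2 e2 f2) (hgen : Gen s e1 f1 e2 f2)
    (m1 : h1 ∈ s) (m2 : e1 ∈ s) (m3 : f1 ∈ s) (m4 : h2 ∈ s) (m5 : e2 ∈ s) (m6 : f2 ∈ s) (i : Fin 4) :
    5 ≤ finrank ℂ (V i) := by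
  have hinv : ∀ i, ∀ x ∈ s, ∀ w ∈ V i, ⁅x, w⁆ ∈ V i := fun i x hx w hw => D.toSetup.inv hx hw
  have hex : ∀ i, ∃ p q v, HW h1 e1 h2 e2 (V i) p q v := fun i =>
    A.exists_hw (D.ne i) (hinv i h1 m1) (hinv i h2 m4) (hinv i e1 m2) (hinv i e2 m5)
  choose p q v hv using hex
  let H : g := h1 + (2 : ℂ) • h2
  have c1 : e1 ∈ cls H 0 := mem_cls 0 (by
    rw [add_lie, smul_lie, A.t1.lie_h_e_smul ℂ, A.h2e1]; simp)
  have c2 : f1 ∈ cls H 0 := mem_cls 0 (by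
    rw [add_lie, smul_lie, A.t1.lie_lie_smul_f ℂ, A.h2f1]; simp)
  have c3 : e2 ∈ cls H 0 := mem_cls 1 (by
    rw [add_lie, smul_lie, A.t2.lie_h_e_smul ℂ, A.h1e2]; push_cast; module)
  have c4 : f2 ∈ cls H 0 := mem_cls (-1) (by
    rw [add_lie, smul_lie, A.t2.lie_lie_smul_f ℂ, A.h1f2]; push_cast; module)
  have hcls : ∀ i, V i ≤ cls H (p i + 2 * q i : ℤ) := by
    intro i
    have hI : Invariant g s (cls H (p i + 2 * q i : ℤ)) :=
      hgen _ (fun w hw => cls_zero_lie c1 hw) (fun w hw => cls_zero_lie c2 hw)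
        (fun w hw => cls_zero_lie c3 hw) (fun w hw => cls_zero_lie c4 hw)
    rcases (D.dec.1 i).2.2 (V i ⊓ cls H (p i + 2 * q i : ℤ)) inf_le_left (fun x hx w hw =>
      ⟨hinv i x hx w hw.1, hI x hx w hw.2⟩) with h | h
    · exfalso
      have : v i ∈ V i ⊓ cls H (p i + 2 * q i : ℤ) := ⟨(hv i).mem, mem_cls 0 (by
        rw [add_lie, smul_lie, (hv i).h1v, (hv i).h2v]; push_cast; module)⟩
      rw [h] at this
      exact (hv i).ne (by simpa using this)
    · exact inf_eq_left.1 h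
  have hadd : ∀ i j k, lieSpan2 g (V i) (V j) = V k →
      ∃ n : ℤ, ((p i + 2 * q i : ℤ) + (p j + 2 * q j : ℤ)) - (p k + 2 * q k : ℤ) = 3 * n := by
    intro i j k hb
    obtain ⟨a, ha, b, hb', hne⟩ := exists_lie_ne (A := V i) (B := V j) (by rw [hb]; exact D.ne k)
    have h3 : ⁅a, b⁆ ∈ V k := by rw [← hb]; exact lie_mem_lieSpan2 ha hb'
    exact cls_eq (lie_mem_cls (hcls i ha) (hcls j hb')) (hcls k h3) hne
  have hdvd : ∀ i, ∃ n : ℤ, (p i + 2 * q i : ℤ) = 3 * n := by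
    obtain ⟨n1, k1⟩ := hadd _ _ _ D.b02
    have : (∃ n : ℤ, (p 0 + 2 * q 0 : ℤ) = 3 * n) ∧ (∃ n : ℤ, (p 1 + 2 * q 1 : ℤ) = 3 * n) ∧
        (∃ n : ℤ, (p 2 + 2 * q 2 : ℤ) = 3 * n) ∧ (∃ n : ℤ, (p 3 + 2 * q 3 : ℤ) = 3 * n) := by
      rcases D.pat with ⟨b00, b01, b11, -⟩ | ⟨b00, b01, b11, -⟩ | ⟨b00, b01, b11, -⟩ |
        ⟨b00, b01, b11⟩
      all_goals
        obtain ⟨n2, k2⟩ := hadd _ _ _ b00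
        obtain ⟨n3, k3⟩ := hadd _ _ _ b01
        obtain ⟨n4, k4⟩ := hadd _ _ _ b11
        clear hadd hcls
        generalize (p 0 + 2 * q 0 : ℤ) = a at *
        generalize (p 1 + 2 * q 1 : ℤ) = b at *
        generalize (p 2 + 2 * q 2 : ℤ) = c at *
        generalize (p 3 + 2 * q 3 : ℤ) = d at *
        refine ⟨⟨a / 3, by omega⟩, ⟨b / 3, by omega⟩, ⟨c / 3, by omega⟩, ⟨d / 3, by omega⟩⟩
    obtain ⟨t0, t1, t2, t3⟩ := this
    intro i
    fin_cases i
    exacts [t0, t1, t2, t3]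
  obtain ⟨n, hn⟩ := hdvd i
  by_cases h00 : p i = 0 ∧ q i = 0
  · exfalso
    have P1 : A.t1.HasPrimitiveVectorWith (v i) (p i : ℂ) := ⟨(hv i).ne, (hv i).h1v, (hv i).e1v⟩
    have P2 : A.t2.HasPrimitiveVectorWith (v i) (q i : ℂ) := ⟨(hv i).ne, (hv i).h2v, (hv i).e2v⟩
    have z1 : ⁅f1, v i⁆ = 0 := by
      have := P1.pow_toEnd_f_eq_zero_of_eq_nat rfl
      rw [h00.1] at this; simpa using this
    have z2 : ⁅f2, v i⁆ = 0 := by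
      have := P2.pow_toEnd_f_eq_zero_of_eq_nat rfl
      rw [h00.2] at this; simpa using this
    have hz : ∀ x : g, ⁅x, v i⁆ = 0 → ∀ w ∈ Submodule.span ℂ {v i}, ⁅x, w⁆ ∈ Submodule.span ℂ {v i} := by
      intro x hx w hw
      obtain ⟨t, rfl⟩ := Submodule.mem_span_singleton.1 hw
      rw [lie_smul, hx, smul_zero]; exact zero_mem _
    have hI := hgen (Submodule.span ℂ {v i}) (hz _ (hv i).e1v) (hz _ z1) (hz _ (hv i).e2v) (hz _ z2)
    have hsq := D.sq h8 i
    rcases (D.dec.1 i).2.2 _ (by simpa using (hv i).mem) hI with h | h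
    · exact (hv i).ne (by simpa using h)
    · rw [← h, finrank_span_singleton (hv i).ne] at hsq
      omega
  · by_cases hpq : (1 ≤ p i ∧ 1 ≤ q i) ∨ 3 ≤ p i
    · exact A.dim_aux (hinv i f1 m3) (hinv i f2 m6) (hv i) hpq
    · exact A.symm.dim_aux (hinv i f2 m6) (hinv i f1 m3) (hv i).symm (by omega)

end a2
end Symp

namespace Symp
section final
open Module
variable {g : Type*} [LieRing g] [LieAlgebra ℂ g]
variable {s : LieSubalgebra ℂ g} {V : Fin 4 → Submodule ℂ g}

lemma Setup.finrank_eq [FiniteDimensional ℂ g] (h : Setup s V) :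
    finrank ℂ g = finrank ℂ s + ∑ i, finrank ℂ (V i) := by
  classical
  have hinternal := (DirectSum.isInternal_submodule_iff_iSupIndep_and_iSup_eq_top _).2
    ⟨h.pieces_ind, h.pieces_top⟩
  let E := LinearEquiv.ofBijective (DirectSum.coeLinearMap (pieces s V)) hinternal
  rw [← E.finrank_eq, Module.finrank_directSum, Fintype.sum_option]
  rfl

lemma finrank_sl2 : finrank ℂ (LieAlgebra.SpecialLinear.sl (Fin 2) ℂ) = 3 := by
  have h1 := LinearMap.finrank_range_add_finrank_ker (Matrix.traceLinearMap (Fin 2) ℂ ℂ)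
  have h2 : LinearMap.range (Matrix.traceLinearMap (Fin 2) ℂ ℂ) = ⊤ := by
    rw [LinearMap.range_eq_top]
    intro c
    exact ⟨Matrix.single 0 0 c, by simp [Matrix.trace_single_eq_same]⟩
  rw [h2, finrank_top, Module.finrank_matrix] at h1
  simp at h1
  have : finrank ℂ (LieAlgebra.SpecialLinear.sl (Fin 2) ℂ) =
    finrank ℂ (LinearMap.ker (Matrix.traceLinearMap (Fin 2) ℂ ℂ)) := rfl
  omega

lemma triple_li {L : Type*} [LieRing L] [LieAlgebra ℂ L] {h e f : L} (t : IsSl2Triple h e f) :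
    LinearIndependent ℂ ![e, f, h] := by
  have hinj : Function.Injective ![(2 : ℂ), -2, 0] := by
    intro i j hij
    fin_cases i <;> fin_cases j <;> first | rfl | (exfalso; revert hij; norm_num)
  refine Module.End.eigenvectors_linearIndependent' (LieModule.toEnd ℂ L L h) ![2, -2, 0] hinj _ ?_
  intro i
  fin_cases i
  · exact ⟨by rw [Module.End.mem_eigenspace_iff]; exact t.lie_h_e_smul ℂ, t.e_ne_zero⟩
  · exact ⟨by rw [Module.End.mem_eigenspace_iff]; simpa using t.lie_lie_smul_f ℂ, t.f_ne_zero⟩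
  · exact ⟨by rw [Module.End.mem_eigenspace_iff]; simp, t.h_ne_zero⟩

lemma sl2_equiv {L : Type*} [LieRing L] [LieAlgebra ℂ L] {h e f : L} (t : IsSl2Triple h e f)
    (hs : ∀ x : L, x ∈ Submodule.span ℂ {e, f, h}) :
    Nonempty (L ≃ₗ⁅ℂ⁆ LieAlgebra.SpecialLinear.sl (Fin 2) ℂ) := by
  have htr : ∀ A : LieAlgebra.SpecialLinear.sl (Fin 2) ℂ, A.1 1 1 = - A.1 0 0 := by
    intro A
    have h0 : Matrix.trace A.1 = 0 := A.2
    rw [Matrix.trace_fin_two] at h0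
    linear_combination h0
  have hfe : ⁅f, e⁆ = -h := by rw [← lie_skew, t.lie_e_f]
  have heh : ⁅e, h⁆ = -((2 : ℂ) • e) := by rw [← lie_skew, t.lie_h_e_smul ℂ]
  have hfh : ⁅f, h⁆ = (2 : ℂ) • f := by rw [← lie_skew, t.lie_lie_smul_f ℂ, neg_neg]
  let φ : LieAlgebra.SpecialLinear.sl (Fin 2) ℂ →ₗ⁅ℂ⁆ L :=
    { toFun := fun A => A.1 0 1 • e + A.1 1 0 • f + A.1 0 0 • h
      map_add' := fun A B => by
        change (A.1 + B.1) 0 1 • e + (A.1 + B.1) 1 0 • f + (A.1 + B.1) 0 0 • h = _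
        simp only [Matrix.add_apply]; module
      map_smul' := fun c A => by
        change (c • A.1) 0 1 • e + (c • A.1) 1 0 • f + (c • A.1) 0 0 • h = _
        simp only [Matrix.smul_apply, smul_eq_mul, RingHom.id_apply]; module
      map_lie' := fun {A B} => by
        change (⁅A, B⁆.val) 0 1 • e + (⁅A, B⁆.val) 1 0 • f + (⁅A, B⁆.val) 0 0 • h = _
        rw [LieAlgebra.SpecialLinear.sl_bracket]
        simp only [Matrix.sub_apply, Matrix.mul_apply, Fin.sum_univ_two, htr, lie_add, add_lie,
          lie_smul, smul_lie, lie_self, t.lie_e_f, hfe, heh, hfh, t.lie_h_e_smul ℂ,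
          t.lie_lie_smul_f ℂ]
        module }
  have hbij : Function.Bijective φ := by
    constructor
    · intro A B hAB
      have hd : ∀ A, φ A = A.1 0 1 • e + A.1 1 0 • f + A.1 0 0 • h := fun _ => rfl
      have h0 : (A.1 0 1 - B.1 0 1) • e + (A.1 1 0 - B.1 1 0) • f + (A.1 0 0 - B.1 0 0) • h = 0 := by
        rw [hd, hd, ← sub_eq_zero] at hAB
        rw [← hAB]; module
      have hli := Fintype.linearIndependent_iff.1 (triple_li t)
        ![A.1 0 1 - B.1 0 1, A.1 1 0 - B.1 1 0, A.1 0 0 - B.1 0 0] (by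
          rw [Fin.sum_univ_three]; exact h0)
      have i0 := sub_eq_zero.1 (hli 0)
      have i1 := sub_eq_zero.1 (hli 1)
      have i2 := sub_eq_zero.1 (hli 2)
      apply Subtype.ext
      ext i j
      fin_cases i <;> fin_cases j
      · exact i2
      · exact i0
      · exact i1
      · change A.1 1 1 = B.1 1 1
        rw [htr, htr, i2]
    · intro x
      obtain ⟨a, b, c, rfl⟩ := Submodule.mem_span_triple.1 (hs x)
      refine ⟨⟨!![c, a; b, -c], ?_⟩, ?_⟩
      · change Matrix.trace (!![c, a; b, -c] : Matrix (Fin 2) (Fin 2) ℂ) = 0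
        simp [Matrix.trace_fin_two]
      · change (!![c, a; b, -c] : Matrix (Fin 2) (Fin 2) ℂ) 0 1 • e + (!![c, a; b, -c] : Matrix (Fin 2) (Fin 2) ℂ) 1 0 • f +
          (!![c, a; b, -c] : Matrix (Fin 2) (Fin 2) ℂ) 0 0 • h = _
        simp
  exact ⟨(LieEquiv.ofBijective φ hbij).symm⟩

lemma triple_coe {h e f : s} (t : IsSl2Triple h e f) : IsSl2Triple (h : g) (e : g) (f : g) :=
  ⟨by simpa using t.h_ne_zero, by rw [← LieSubalgebra.coe_bracket, t.lie_e_f],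
    by rw [← LieSubalgebra.coe_bracket, t.lie_h_e_nsmul]; rfl,
    by rw [← LieSubalgebra.coe_bracket, t.lie_h_f_nsmul]; rfl⟩

lemma A2_coe {h1 e1 f1 h2 e2 f2 : s} (A : A2 h1 e1 f1 h2 e2 f2) :
    A2 (h1 : g) e1 f1 h2 e2 f2 :=
  ⟨triple_coe A.t1, triple_coe A.t2, by rw [← LieSubalgebra.coe_bracket, A.e2f1]; rfl,
    by rw [← LieSubalgebra.coe_bracket, A.e1f2]; rfl,
    by rw [← LieSubalgebra.coe_bracket, A.h1e2]; rfl,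
    by rw [← LieSubalgebra.coe_bracket, A.h1f2],
    by rw [← LieSubalgebra.coe_bracket, A.h2e1]; rfl,
    by rw [← LieSubalgebra.coe_bracket, A.h2f1],
    by rw [← LieSubalgebra.coe_bracket, A.h1h2]; rfl⟩

lemma Data.final [FiniteDimensional ℂ g] (D : Data s V) : 25 ≤ finrank ℂ g ∧
    (finrank ℂ g = 25 → Nonempty (s ≃ₗ⁅ℂ⁆ LieAlgebra.SpecialLinear.sl (Fin 2) ℂ) ∧
      finrank ℂ (V 0) = 7 ∧ finrank ℂ (V 1) = 5 ∧ finrank ℂ (V 2) = 7 ∧ finrank ℂ (V 3) = 3 ∧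
      centerRad g = V 3) := by
  have hdim := D.toSetup.finrank_eq
  have := D.levi.1
  rcases trichotomy (L := s) with ⟨h, e, f, t, hs⟩ | h10 | ⟨h8, h1, e1, f1, h2, e2, f2, A, hg⟩
  · have heq := sl2_equiv t hs
    have h3 : finrank ℂ s = 3 := by
      rw [heq.some.toLinearEquiv.finrank_eq, finrank_sl2]
    have hspan : s.toSubmodule = Submodule.span ℂ {(e : g), (f : g), (h : g)} := by
      apply le_antisymm
      · intro x hx
        obtain ⟨a, b, c, habc⟩ := Submodule.mem_span_triple.1 (hs ⟨x, hx⟩)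
        exact Submodule.mem_span_triple.2 ⟨a, b, c, congrArg Subtype.val habc⟩
      · rw [Submodule.span_le]
        rintro x (rfl | rfl | rfl)
        · exact e.2
        · exact f.2
        · exact h.2
    obtain ⟨k1, k2⟩ := D.sl2 (triple_coe t) hspan
    refine ⟨by omega, fun h25 => ⟨heq, k2 (by omega)⟩⟩
  · have h4 : ∀ i, 4 ≤ finrank ℂ (V i) := by
      intro i
      have := D.sq (by omega) i
      by_contra hlt
      have : finrank ℂ (V i) ≤ 3 := by omega
      nlinarith
    rw [Fin.sum_univ_four] at hdim
    have a0 := h4 0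
    have a1 := h4 1
    have a2 := h4 2
    have a3 := h4 3
    exact ⟨by omega, fun h => by omega⟩
  · have h5 : ∀ i, 5 ≤ finrank ℂ (V i) :=
      D.a2 h8 (A2_coe A) (gen_of hg) h1.2 e1.2 f1.2 h2.2 e2.2 f2.2
    rw [Fin.sum_univ_four] at hdim
    have a0 := h5 0
    have a1 := h5 1
    have a2 := h5 2
    have a3 := h5 3
    exact ⟨by omega, fun h => by omega⟩

end final
end Symp

/-- a non-semisimple sympathetic Lie algebra with simple Levi subalgebra and
4 simple modules satisfying the convention has dimension ≥ 25, with equality iff the Levi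
subalgebra is `sl₂(ℂ)` and the modules have dimensions 7, 5, 7, 3 (highest weights
6, 4, 6, 2), the centre of the radical being the 3-dimensional one. -/
theorem stmt16 (g : Type*) [LieRing g] [LieAlgebra ℂ g] [FiniteDimensional ℂ g]
    (hsymp : Symp.IsSympathetic g)
    (hnss : LieAlgebra.radical ℂ g ≠ ⊥)
    (s : LieSubalgebra ℂ g) (hs : Symp.IsSimpleLevi g s)
    (V : Fin 4 → Submodule ℂ g) (hdec : Symp.IsDecomp g s V)
    (hconv : Symp.Convention g V) :
    25 ≤ Module.finrank ℂ g ∧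
    (Module.finrank ℂ g = 25 ↔
      Nonempty (s ≃ₗ⁅ℂ⁆ LieAlgebra.SpecialLinear.sl (Fin 2) ℂ) ∧
      ∃ e : Equiv.Perm (Fin 4),
        Module.finrank ℂ (V (e 0)) = 7 ∧
        Module.finrank ℂ (V (e 1)) = 5 ∧
        Module.finrank ℂ (V (e 2)) = 7 ∧
        Module.finrank ℂ (V (e 3)) = 3 ∧
        Symp.centerRad g = V (e 3)) := by
  have S : Symp.Setup s V := ⟨hsymp, hs, hdec, hconv⟩
  obtain ⟨e, D⟩ := S.exists_data
  obtain ⟨h1, h2⟩ := D.final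
  refine ⟨h1, fun h => ?_, ?_⟩
  · obtain ⟨k1, k2⟩ := h2 h
    exact ⟨k1, e, k2⟩
  · rintro ⟨⟨E⟩, e', a0, a1, a2, a3, -⟩
    rw [S.finrank_eq, E.toLinearEquiv.finrank_eq, Symp.finrank_sl2,
      ← Equiv.sum_comp e' (fun i => Module.finrank ℂ (V i)), Fin.sum_univ_four, a0, a1, a2, a3]
    norm_num
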